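/- arXiv:1603.09468 — 2 statements merged into one kernel-verified Lean document; each statement's English description precedes it below -/
import Mathlib

section
/- Main symmetry theorem: Let α ∈ (0,2) and let (u,v) ∈ (L_α ∩ C^{1,1}_{loc}(ℝ^n))² be a positive solution of (−Δ)^{α/2}u = f(u,v), (−Δ)^{α/2}v = g(u,v) with f, g ∈ C¹([0,∞)², ℝ). Assume (i) u(x) ≲ |x|^{−a}, v(x) ≲ |x|^{−b} as |x| → ∞ (a,b > 0); (ii) ∂f/∂u ≲ u^{p−1}v^q, ∂g/∂v ≲ u^r v^{s−1} as (u,v) → (0⁺,0⁺); (iii) ∂f/∂v ≲ u^p v^{q−1}, ∂g/∂u ≲ u^{r−1}v^s as (u,v) → (0⁺,0⁺); (iv) ∂f/∂v > 0 and ∂g/∂u > 0 on (0,∞)²; (v) α < min{ap+bq−a, ap+bq−b, ar+bs−a, ar+bs−b}, with p,q,r,s ≥ 1. Then there exists x₀ ∈ ℝ^n such that u and v are radially symmetric about x₀, i.e. u(x) and v(x) depend only on |x − x₀|. -/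
open Set MeasureTheory Filter

/-- `F x` is the value of the principal-value fractional Laplacian
`(−Δ)^{α/2} u` (with normalizing constant `C`) at every point `x`. -/
def IsFracLap (n : ℕ) (α C : ℝ) (u F : EuclideanSpace ℝ (Fin n) → ℝ) : Prop :=
  ∀ x, Tendsto
    (fun ε : ℝ => C * ∫ y in {y : EuclideanSpace ℝ (Fin n) | ε ≤ dist x y},
      (u x - u y) / dist x y ^ ((n : ℝ) + α))
    (nhdsWithin 0 (Ioi 0)) (nhds (F x))

/-- Membership in the space `L_α`. -/
def MemLalpha (n : ℕ) (α : ℝ) (u : EuclideanSpace ℝ (Fin n) → ℝ) : Prop :=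
  Integrable (fun x : EuclideanSpace ℝ (Fin n) => |u x| / (1 + ‖x‖ ^ ((n : ℝ) + α)))

/-- `C^{1,1}_{loc}` regularity: `C¹` with locally Lipschitz derivative. -/
def C11loc {n : ℕ} (u : EuclideanSpace ℝ (Fin n) → ℝ) : Prop :=
  ContDiff ℝ 1 u ∧ LocallyLipschitz (fderiv ℝ u)

namespace MP

/-- Reflection across the hyperplane `⟪e, x⟫ = l`. -/
noncomputable def refl {n : ℕ} (e : EuclideanSpace ℝ (Fin n)) (l : ℝ)
    (x : EuclideanSpace ℝ (Fin n)) : EuclideanSpace ℝ (Fin n) :=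
  x + (2 * (l - inner ℝ e x)) • e

section
variable {n : ℕ} {e : EuclideanSpace ℝ (Fin n)}

lemma inner_self_one (he : ‖e‖ = 1) : inner ℝ e e = (1:ℝ) := by
  rw [real_inner_self_eq_norm_sq, he]; norm_num

lemma inner_refl (he : ‖e‖ = 1) (l : ℝ) (x) :
    inner ℝ e (refl e l x) = 2 * l - inner ℝ e x := by
  unfold refl
  rw [inner_add_right, inner_smul_right, inner_self_one he]; ring

lemma refl_refl (he : ‖e‖ = 1) (l : ℝ) (x) : refl e l (refl e l x) = x := by
  have h := inner_refl he l x
  have : refl e l (refl e l x) = refl e l x + (2 * (l - inner ℝ e (refl e l x))) • e := rfl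
  rw [this, h]
  unfold refl
  rw [add_assoc, ← add_smul]
  have : (2 * (l - inner ℝ e x) + 2 * (l - (2 * l - inner ℝ e x))) = (0:ℝ) := by ring
  rw [this, zero_smul, add_zero]

lemma dist_refl_sq (he : ‖e‖ = 1) (l : ℝ) (x y) :
    dist x (refl e l y) ^ 2 =
      dist x y ^ 2 + 4 * ((l - inner ℝ e x) * (l - inner ℝ e y)) := by
  unfold refl
  rw [dist_eq_norm, dist_eq_norm]
  have : x - (y + (2 * (l - inner ℝ e y)) • e) = (x - y) - (2 * (l - inner ℝ e y)) • e := by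
    abel
  rw [this, norm_sub_sq_real, inner_smul_right, norm_smul, he, real_inner_comm e (x - y), inner_sub_right,
    mul_one, Real.norm_eq_abs, sq_abs]
  ring

lemma dist_refl_refl (he : ‖e‖ = 1) (l : ℝ) (x y) :
    dist (refl e l x) (refl e l y) = dist x y := by
  have h1 := dist_refl_sq he l (refl e l x) y
  have h2 := dist_refl_sq he l y x
  rw [inner_refl he, dist_comm (refl e l x) y, h2, dist_comm y x] at h1
  have : dist (refl e l x) (refl e l y) ^ 2 = dist x y ^ 2 := by rw [h1]; ring
  exact (pow_left_inj₀ dist_nonneg dist_nonneg two_ne_zero).1 this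

lemma dist_refl_comm (he : ‖e‖ = 1) (l : ℝ) (x y) :
    dist (refl e l x) y = dist x (refl e l y) := by
  rw [← dist_refl_refl he l x, refl_refl he]

lemma dist_le_dist_refl (he : ‖e‖ = 1) {l : ℝ} {x y : EuclideanSpace ℝ (Fin n)}
    (hx : inner ℝ e x ≤ l) (hy : inner ℝ e y ≤ l) : dist x y ≤ dist x (refl e l y) := by
  have h := dist_refl_sq he l x y
  have := mul_nonneg (sub_nonneg.2 hx) (sub_nonneg.2 hy)
  exact (pow_le_pow_iff_left₀ dist_nonneg dist_nonneg two_ne_zero).1 (by linarith)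

lemma dist_lt_dist_refl (he : ‖e‖ = 1) {l : ℝ} {x y : EuclideanSpace ℝ (Fin n)}
    (hx : inner ℝ e x < l) (hy : inner ℝ e y < l) : dist x y < dist x (refl e l y) := by
  have h := dist_refl_sq he l x y
  have := mul_pos (sub_pos.2 hx) (sub_pos.2 hy)
  exact (pow_lt_pow_iff_left₀ dist_nonneg dist_nonneg two_ne_zero).1 (by linarith)

lemma inner_sub_le_dist (he : ‖e‖ = 1) (x y : EuclideanSpace ℝ (Fin n)) :
    inner ℝ e y - inner ℝ e x ≤ dist x y := by
  rw [← inner_sub_right, dist_comm, dist_eq_norm]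
  have := real_inner_le_norm e (y - x)
  rwa [he, one_mul] at this

lemma le_dist_refl (he : ‖e‖ = 1) {l : ℝ} {x y : EuclideanSpace ℝ (Fin n)}
    (hy : inner ℝ e y ≤ l) : l - inner ℝ e x ≤ dist x (refl e l y) := by
  have := inner_sub_le_dist he x (refl e l y)
  rw [inner_refl he] at this
  linarith

lemma dist_self_refl (he : ‖e‖ = 1) {l : ℝ} {x : EuclideanSpace ℝ (Fin n)}
    (hx : inner ℝ e x ≤ l) : dist x (refl e l x) = 2 * (l - inner ℝ e x) := by
  have h := dist_refl_sq he l x x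
  rw [dist_self] at h
  refine (pow_left_inj₀ dist_nonneg (by linarith) two_ne_zero).1 ?_
  rw [h]; ring

lemma continuous_refl_uncurry :
    Continuous (fun z : ℝ × EuclideanSpace ℝ (Fin n) => refl e z.1 z.2) := by
  unfold refl; fun_prop

lemma continuous_refl (l : ℝ) : Continuous (refl e l) := by
  unfold refl; fun_prop

lemma measurePreserving_refl (he : ‖e‖ = 1) (l : ℝ) :
    MeasurePreserving (refl e l) volume volume := by
  have h1 := (LinearIsometryEquiv.measurePreserving (Submodule.reflection (Submodule.span ℝ {e})ᗮ))
  have h2 := measurePreserving_add_right (volume : Measure (EuclideanSpace ℝ (Fin n))) ((2 * l) • e)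
  have h3 := h2.comp h1
  suffices this : refl e l = (fun x => x + (2 * l) • e) ∘ (Submodule.reflection (Submodule.span ℝ {e})ᗮ) by
    rw [this]; exact h3
  funext x
  simp only [Function.comp, Submodule.reflection_orthogonal_apply,
    Submodule.reflection_singleton_apply, he, refl]
  simp only [RCLike.ofReal_real_eq_id, id, one_pow, div_one, mul_sub, sub_smul, neg_sub, two_smul, two_mul]
  simp only [add_smul]
  abel

lemma measurableEmbedding_refl (he : ‖e‖ = 1) (l : ℝ) : MeasurableEmbedding (refl e l) :=
  (Homeomorph.mk (Equiv.mk (refl e l) (refl e l) (refl_refl he l) (refl_refl he l))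
    (continuous_refl l) (continuous_refl l)).measurableEmbedding

/-- The truncated integrand. -/
noncomputable def trunc (α : ℝ) (U : EuclideanSpace ℝ (Fin n) → ℝ) (x : EuclideanSpace ℝ (Fin n))
    (ε : ℝ) : EuclideanSpace ℝ (Fin n) → ℝ :=
  indicator {y | ε ≤ dist x y} (fun y => (U x - U y) / dist x y ^ ((n:ℝ) + α))

lemma measurableSet_far (x : EuclideanSpace ℝ (Fin n)) (ε : ℝ) :
    MeasurableSet {y | ε ≤ dist x y} :=
  (isClosed_le continuous_const (continuous_const.dist continuous_id)).measurableSet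

lemma integrable_trunc {α : ℝ} (hα : 0 < α) {U : EuclideanSpace ℝ (Fin n) → ℝ}
    (hU : Continuous U) {M : ℝ} (hM : ∀ x, |U x| ≤ M) (x) {ε : ℝ} (hε : 0 < ε) :
    Integrable (trunc α U x ε) := by
  have h1 : Integrable (fun y : EuclideanSpace ℝ (Fin n) => (1 + ‖y‖) ^ (-((n:ℝ) + α))) :=
    integrable_one_add_norm (by simp [hα])
  have h2 := (h1.comp_sub_right x).const_mul (2 * M * ((1 + ε) / ε) ^ ((n:ℝ) + α))
  have hna : 0 < (n:ℝ) + α := by positivity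
  refine h2.mono' ?_ (Eventually.of_forall fun y => ?_)
  · refine AEStronglyMeasurable.indicator ?_ (measurableSet_far x ε)
    apply Measurable.aestronglyMeasurable
    have := hU.measurable
    fun_prop
  · have hM0 : 0 ≤ M := (abs_nonneg _).trans (hM x)
    unfold trunc
    by_cases hy : ε ≤ dist x y
    · rw [indicator_of_mem (show y ∈ {y | ε ≤ dist x y} from hy)]
      have hd : 0 < dist x y := hε.trans_le hy
      rw [Real.norm_eq_abs, abs_div, abs_of_nonneg (Real.rpow_nonneg hd.le _), ← dist_eq_norm,
        dist_comm y x, div_eq_mul_inv, ← Real.rpow_neg hd.le, mul_assoc (2 * M)]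
      have hb : |U x - U y| ≤ 2 * M := by
        have := abs_sub (U x) (U y); have := hM x; have := hM y; linarith
      refine mul_le_mul hb ?_ (by positivity) (by positivity)
      rw [Real.rpow_neg hd.le, Real.rpow_neg (by positivity), ← div_eq_mul_inv,
        ← Real.div_rpow (by positivity) (by positivity), ← Real.inv_rpow hd.le]
      refine Real.rpow_le_rpow (by positivity) ?_ hna.le
      rw [inv_eq_one_div, div_div, div_le_div_iff₀ hd (by positivity)]
      nlinarith
    · rw [indicator_of_notMem (show y ∉ {y | ε ≤ dist x y} from hy), norm_zero]
      positivity

lemma tendsto_diff {α C : ℝ} (hα : 0 < α) {u F : EuclideanSpace ℝ (Fin n) → ℝ}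
    (hu : Continuous u) {M : ℝ} (hM : ∀ x, |u x| ≤ M) (hF : IsFracLap n α C u F)
    (he : ‖e‖ = 1) (l : ℝ) (x) :
    Tendsto (fun ε : ℝ => C * ∫ y, trunc α (fun z => u (refl e l z) - u z) x ε y)
      (nhdsWithin 0 (Ioi 0)) (nhds (F (refl e l x) - F x)) := by
  refine ((hF (refl e l x)).sub (hF x)).congr' ?_
  filter_upwards [self_mem_nhdsWithin] with ε hε
  have hε : 0 < ε := hε
  rw [← mul_sub]
  congr 1
  rw [← integral_indicator (measurableSet_far _ _), ← integral_indicator (measurableSet_far _ _)]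
  rw [← (measurePreserving_refl he l).integral_comp (measurableEmbedding_refl he l)]
  have i1 := integrable_trunc hα hu hM (refl e l x) hε
  have i2 := integrable_trunc hα hu hM x hε
  have i1' := (measurePreserving_refl he l).integrable_comp_of_integrable i1
  change (∫ y, (trunc α u (refl e l x) ε ∘ refl e l) y) - ∫ y, trunc α u x ε y = _
  rw [← integral_sub i1' i2]
  congr 1
  funext y
  simp only [Function.comp, trunc]
  by_cases hy : ε ≤ dist x y
  · rw [indicator_of_mem (by simpa [dist_refl_refl he] using hy), indicator_of_mem (by simpa using hy),
      indicator_of_mem (by simpa using hy), dist_refl_refl he]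
    ring
  · rw [indicator_of_notMem (by simpa [dist_refl_refl he] using hy),
      indicator_of_notMem (by simpa using hy),
      indicator_of_notMem (by simpa using hy)]
    ring

lemma real_ball [NeZero n] (x : EuclideanSpace ℝ (Fin n)) {r : ℝ} (hr : 0 ≤ r) :
    (volume : Measure (EuclideanSpace ℝ (Fin n))).real (Metric.ball x r) =
      r ^ n * (volume : Measure (EuclideanSpace ℝ (Fin n))).real (Metric.ball 0 1) := by
  rw [measureReal_def, Measure.addHaar_ball volume x hr, ENNReal.toReal_mul,
    ENNReal.toReal_ofReal (by positivity), measureReal_def]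
  simp

lemma real_ball_pos (x : EuclideanSpace ℝ (Fin n)) {r : ℝ} (hr : 0 < r) :
    0 < (volume : Measure (EuclideanSpace ℝ (Fin n))).real (Metric.ball x r) :=
  ENNReal.toReal_pos (Metric.measure_ball_pos volume x hr).ne' measure_ball_lt_top.ne

/-- Antisymmetrized pointwise estimate. -/
lemma trunc_sum_le {α : ℝ} (hα : 0 < α) (he : ‖e‖ = 1) {l : ℝ}
    {U : EuclideanSpace ℝ (Fin n) → ℝ} (hanti : ∀ y, U (refl e l y) = - U y)
    {M : ℝ} (hM : ∀ x, |U x| ≤ M) {x : EuclideanSpace ℝ (Fin n)} (hx : inner ℝ e x < l)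
    (hx0 : U x ≤ 0) (hmin : ∀ y, inner ℝ e y ≤ l → U x ≤ U y)
    {B : Set (EuclideanSpace ℝ (Fin n))} {c : ℝ} (hc : 0 ≤ c)
    (hB : ∀ y ∈ B, c ≤ (U y - U x) * ((dist x y ^ ((n:ℝ) + α))⁻¹ -
      (dist x (refl e l y) ^ ((n:ℝ) + α))⁻¹)
        - 2 * U x * (dist x (refl e l y) ^ ((n:ℝ) + α))⁻¹)
    {ε : ℝ} (hε : 0 < ε) (hεx : ε ≤ l - inner ℝ e x)
    {y : EuclideanSpace ℝ (Fin n)} (hy : inner ℝ e y ≤ l) :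
    trunc α U x ε y + trunc α U x ε (refl e l y) ≤
      indicator (Metric.ball x ε)
        (fun _ => 2 * M * ((l - inner ℝ e x) ^ ((n:ℝ) + α))⁻¹ + c) y
      - indicator B (fun _ => c) y := by
  have hna : 0 < (n:ℝ) + α := by positivity
  have hM0 : 0 ≤ M := (abs_nonneg _).trans (hM x)
  have hdx : 0 < l - inner ℝ e x := sub_pos.2 hx
  have hd := le_dist_refl he (x := x) hy
  have hk : (dist x (refl e l y) ^ ((n:ℝ) + α))⁻¹ ≤ ((l - inner ℝ e x) ^ ((n:ℝ) + α))⁻¹ :=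
    inv_anti₀ (Real.rpow_pos_of_pos hdx _) (Real.rpow_le_rpow hdx.le hd hna.le)
  have hk0 : 0 ≤ (dist x (refl e l y) ^ ((n:ℝ) + α))⁻¹ := by positivity
  have hBi : indicator B (fun _ => c) y ≤ c := by
    by_cases h : y ∈ B
    · rw [indicator_of_mem h]
    · rw [indicator_of_notMem h]; exact hc
  have h2 : trunc α U x ε (refl e l y) = (U x + U y) * (dist x (refl e l y) ^ ((n:ℝ) + α))⁻¹ := by
    unfold trunc
    rw [indicator_of_mem (show refl e l y ∈ {y | ε ≤ dist x y} from hεx.trans hd), hanti,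
      sub_neg_eq_add, div_eq_mul_inv]
  rw [h2]
  by_cases hxy : ε ≤ dist x y
  · have h1 : trunc α U x ε y = (U x - U y) * (dist x y ^ ((n:ℝ) + α))⁻¹ := by
      unfold trunc
      rw [indicator_of_mem (show y ∈ {y | ε ≤ dist x y} from hxy), div_eq_mul_inv]
    have hnb : y ∉ Metric.ball x ε := by
      rw [Metric.mem_ball, dist_comm]; exact not_lt.2 hxy
    rw [h1, indicator_of_notMem hnb]
    have hkk : (dist x (refl e l y) ^ ((n:ℝ) + α))⁻¹ ≤ (dist x y ^ ((n:ℝ) + α))⁻¹ :=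
      inv_anti₀ (Real.rpow_pos_of_pos (hε.trans_le hxy) _)
        (Real.rpow_le_rpow dist_nonneg (dist_le_dist_refl he hx.le hy) hna.le)
    have hm := hmin y hy
    by_cases h : y ∈ B
    · rw [indicator_of_mem h]
      have := hB y h
      linarith
    · rw [indicator_of_notMem h]
      have := mul_nonneg (sub_nonneg.2 hm) (sub_nonneg.2 hkk)
      have := mul_nonneg (neg_nonneg.2 hx0) hk0
      linarith
  · have h1 : trunc α U x ε y = 0 := by
      unfold trunc
      rw [indicator_of_notMem (show y ∉ {y | ε ≤ dist x y} from hxy)]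
    have hnb : y ∈ Metric.ball x ε := by
      rw [Metric.mem_ball, dist_comm]; exact not_le.1 hxy
    rw [h1, indicator_of_mem hnb]
    have : (U x + U y) * (dist x (refl e l y) ^ ((n:ℝ) + α))⁻¹ ≤
        2 * M * ((l - inner ℝ e x) ^ ((n:ℝ) + α))⁻¹ := by
      refine mul_le_mul ?_ hk hk0 (by positivity)
      have := (abs_le.1 (hM x)).2; have := (abs_le.1 (hM y)).2; linarith
    linarith

lemma pv_le [NeZero n] {α C L : ℝ} (hα : 0 < α) (hC : 0 < C) (he : ‖e‖ = 1) {l : ℝ}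
    {U : EuclideanSpace ℝ (Fin n) → ℝ} (hU : Continuous U)
    (hanti : ∀ y, U (refl e l y) = - U y)
    {M : ℝ} (hM : ∀ x, |U x| ≤ M) {x : EuclideanSpace ℝ (Fin n)} (hx : inner ℝ e x < l)
    (hL : Tendsto (fun ε : ℝ => C * ∫ y, trunc α U x ε y) (nhdsWithin 0 (Ioi 0)) (nhds L))
    (hx0 : U x ≤ 0) (hmin : ∀ y, inner ℝ e y ≤ l → U x ≤ U y)
    {B : Set (EuclideanSpace ℝ (Fin n))} {c : ℝ} (hc : 0 ≤ c) (hBm : MeasurableSet B)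
    (hBf : volume B ≠ ⊤) (hBl : ∀ y ∈ B, inner ℝ e y < l)
    (hB : ∀ y ∈ B, c ≤ (U y - U x) * ((dist x y ^ ((n:ℝ) + α))⁻¹ -
      (dist x (refl e l y) ^ ((n:ℝ) + α))⁻¹)
        - 2 * U x * (dist x (refl e l y) ^ ((n:ℝ) + α))⁻¹) :
    L ≤ - (C * c * volume.real B / 2) := by
  set N : ℝ := 2 * M * ((l - inner ℝ e x) ^ ((n:ℝ) + α))⁻¹ + c with hN
  have hM0 : 0 ≤ M := (abs_nonneg _).trans (hM x)
  have hdx : 0 < l - inner ℝ e x := sub_pos.2 hx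
  have hN0 : 0 ≤ N := by positivity
  have hlim : Tendsto (fun ε : ℝ => C * (-(c * volume.real B / 2) +
      N * (ε ^ n * (volume : Measure (EuclideanSpace ℝ (Fin n))).real (Metric.ball 0 1))))
      (nhdsWithin 0 (Ioi 0)) (nhds (- (C * c * volume.real B / 2))) := by
    have : Continuous (fun ε : ℝ => C * (-(c * volume.real B / 2) +
      N * (ε ^ n * (volume : Measure (EuclideanSpace ℝ (Fin n))).real (Metric.ball 0 1)))) := by
      fun_prop
    have h := (this.tendsto 0).mono_left (nhdsWithin_le_nhds (s := Ioi 0))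
    convert h using 2
    rw [zero_pow (NeZero.ne n)]; ring
  refine le_of_tendsto_of_tendsto hL hlim ?_
  filter_upwards [self_mem_nhdsWithin, Ioo_mem_nhdsGT hdx] with ε hε hε2
  have hε : 0 < ε := hε
  refine mul_le_mul_of_nonneg_left ?_ hC.le
  have i1 := integrable_trunc hα hU hM x hε
  have mp := measurePreserving_refl he l
  have i2 := mp.integrable_comp_of_integrable i1
  have e2 : ∫ y, (trunc α U x ε ∘ refl e l) y = ∫ y, trunc α U x ε y :=
    mp.integral_comp (measurableEmbedding_refl he l) _
  have iball : Integrable (indicator (Metric.ball x ε) (fun _ => N)) volume :=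
    (integrable_indicator_iff measurableSet_ball).2 (integrableOn_const measure_ball_lt_top.ne)
  have iball2 := mp.integrable_comp_of_integrable iball
  have e3 : ∫ y, (indicator (Metric.ball x ε) (fun _ => N) ∘ refl e l) y =
      ∫ y, indicator (Metric.ball x ε) (fun _ => N) y :=
    mp.integral_comp (measurableEmbedding_refl he l) _
  have iB : Integrable (indicator B (fun _ => c)) volume :=
    (integrable_indicator_iff hBm).2 (integrableOn_const hBf)
  have e4 : ∫ y, indicator (Metric.ball x ε) (fun _ => N) y =
      N * (ε ^ n * (volume : Measure (EuclideanSpace ℝ (Fin n))).real (Metric.ball 0 1)) := by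
    rw [integral_indicator measurableSet_ball, setIntegral_const, real_ball x hε.le, smul_eq_mul,
      mul_comm]
  have e5 : ∫ y, indicator B (fun _ => c) y = c * volume.real B := by
    rw [integral_indicator hBm, setIntegral_const, smul_eq_mul, mul_comm]
  have key : ∫ y, (trunc α U x ε y + (trunc α U x ε ∘ refl e l) y) ≤
      ∫ y, ((indicator (Metric.ball x ε) (fun _ => N) y +
        (indicator (Metric.ball x ε) (fun _ => N) ∘ refl e l) y) - indicator B (fun _ => c) y) := by
    refine integral_mono (i1.add i2) ((iball.add iball2).sub iB) fun y => ?_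
    simp only [Function.comp]
    have pos : ∀ z, 0 ≤ indicator (Metric.ball x ε) (fun _ => N) z :=
      fun z => indicator_nonneg (fun _ _ => hN0) z
    have pos2 : ∀ z, 0 ≤ indicator B (fun _ => c) z :=
      fun z => indicator_nonneg (fun _ _ => hc) z
    rcases le_or_gt (inner ℝ e y) l with hy | hy
    · have := trunc_sum_le hα he hanti hM hx hx0 hmin hc hB hε hε2.2.le hy
      rw [← hN] at this
      have := pos (refl e l y)
      linarith
    · have hy' : inner ℝ e (refl e l y) ≤ l := by rw [inner_refl he]; linarith
      have h := trunc_sum_le hα he hanti hM hx hx0 hmin hc hB hε hε2.2.le hy'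
      rw [← hN, refl_refl he] at h
      have hnB : y ∉ B := fun h => absurd (hBl y h) (not_lt.2 hy.le)
      rw [indicator_of_notMem hnB]
      have := pos y
      have := pos2 (refl e l y)
      linarith
  rw [integral_add i1 i2, integral_sub (f := fun y => indicator (Metric.ball x ε) (fun _ => N) y +
        (indicator (Metric.ball x ε) (fun _ => N) ∘ refl e l) y) (iball.add iball2) iB,
    integral_add iball iball2, e2, e3, e4, e5] at key
  linarith

/-- Estimate at a negative minimum. -/
lemma pv_neg_min [NeZero n] {α C L : ℝ} (hα : 0 < α) (hC : 0 < C) (he : ‖e‖ = 1) {l : ℝ}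
    {U : EuclideanSpace ℝ (Fin n) → ℝ} (hU : Continuous U)
    (hanti : ∀ y, U (refl e l y) = - U y)
    {M : ℝ} (hM : ∀ x, |U x| ≤ M) {x : EuclideanSpace ℝ (Fin n)} (hx : inner ℝ e x < l)
    (hL : Tendsto (fun ε : ℝ => C * ∫ y, trunc α U x ε y) (nhdsWithin 0 (Ioi 0)) (nhds L))
    (hx0 : U x ≤ 0) (hmin : ∀ y, inner ℝ e y ≤ l → U x ≤ U y) :
    L ≤ (C * (volume : Measure (EuclideanSpace ℝ (Fin n))).real (Metric.ball 0 1)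
      * (3 ^ ((n:ℝ) + α))⁻¹) * (l - inner ℝ e x) ^ (-α) * U x := by
  have hna : 0 < (n:ℝ) + α := by positivity
  set δ := l - inner ℝ e x with hδ
  have hdx : 0 < δ := sub_pos.2 hx
  have h := pv_le (B := Metric.ball x δ) (c := -2 * U x * ((3 * δ) ^ ((n:ℝ) + α))⁻¹)
    hα hC he hU hanti hM hx hL hx0 hmin
    (mul_nonneg (by linarith) (by positivity)) measurableSet_ball measure_ball_lt_top.ne
    (fun y hy => by
      have h1 := inner_sub_le_dist he x y
      have h2 := Metric.mem_ball.1 hy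
      rw [dist_comm] at h2; linarith)
    (fun y hy => by
      have h2 := Metric.mem_ball.1 hy
      rw [dist_comm] at h2
      have h1 := inner_sub_le_dist he x y
      have hy' : inner ℝ e y ≤ l := by linarith
      have h3 : dist x (refl e l y) ≤ 3 * δ := by
        have := dist_triangle x (refl e l x) (refl e l y)
        rw [dist_refl_refl he, dist_self_refl he hx.le] at this
        linarith
      have h4 : 0 < dist x (refl e l y) := hdx.trans_le (le_dist_refl he hy')
      have h5 : ((3 * δ) ^ ((n:ℝ) + α))⁻¹ ≤ (dist x (refl e l y) ^ ((n:ℝ) + α))⁻¹ :=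
        inv_anti₀ (Real.rpow_pos_of_pos h4 _) (Real.rpow_le_rpow h4.le h3 hna.le)
      have h6 : 0 ≤ (U y - U x) * ((dist x y ^ ((n:ℝ) + α))⁻¹ -
          (dist x (refl e l y) ^ ((n:ℝ) + α))⁻¹) := by
        by_cases hxy : x = y
        · subst hxy; simp
        · exact mul_nonneg (sub_nonneg.2 (hmin y hy')) (sub_nonneg.2
            (inv_anti₀ (Real.rpow_pos_of_pos (dist_pos.2 hxy) _)
              (Real.rpow_le_rpow dist_nonneg (dist_le_dist_refl he hx.le hy') hna.le)))
      have := mul_le_mul_of_nonneg_left h5 (show 0 ≤ -2 * U x by linarith)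
      linarith)
  rw [real_ball x hdx.le] at h
  refine h.trans (le_of_eq ?_)
  rw [Real.mul_rpow (by norm_num) hdx.le, Real.rpow_add hdx, Real.rpow_natCast, Real.rpow_neg hdx.le]
  have h1 : δ ^ n ≠ 0 := by positivity
  have h2 : δ ^ α ≠ 0 := by positivity
  have h3 : (3:ℝ) ^ ((n:ℝ) + α) ≠ 0 := by positivity
  field_simp

/-- Strong maximum principle. -/
lemma strong_max [NeZero n] {α C L : ℝ} (hα : 0 < α) (hC : 0 < C) (he : ‖e‖ = 1) {l : ℝ}
    {U : EuclideanSpace ℝ (Fin n) → ℝ} (hU : Continuous U)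
    (hanti : ∀ y, U (refl e l y) = - U y)
    {M : ℝ} (hM : ∀ x, |U x| ≤ M) {x : EuclideanSpace ℝ (Fin n)} (hx : inner ℝ e x < l)
    (hL : Tendsto (fun ε : ℝ => C * ∫ y, trunc α U x ε y) (nhdsWithin 0 (Ioi 0)) (nhds L))
    (hx0 : U x = 0) (hmin : ∀ y, inner ℝ e y ≤ l → 0 ≤ U y) (hL0 : 0 ≤ L)
    (y : EuclideanSpace ℝ (Fin n)) (hy : inner ℝ e y < l) : U y = 0 := by
  have hna : 0 < (n:ℝ) + α := by positivity
  by_contra hne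
  have hpos : 0 < U y := lt_of_le_of_ne (hmin y hy.le) (Ne.symm hne)
  have hxy : x ≠ y := by rintro rfl; exact hne hx0
  have hd : 0 < dist x y := dist_pos.2 hxy
  have hlt := dist_lt_dist_refl he hx hy
  let φ : EuclideanSpace ℝ (Fin n) → ℝ := fun y => U y * ((dist x y ^ ((n:ℝ) + α))⁻¹ -
      (dist x (refl e l y) ^ ((n:ℝ) + α))⁻¹)
  have hφc : ContinuousAt φ y := by
    have hr : Continuous (refl e l) := continuous_refl l
    refine hU.continuousAt.mul (ContinuousAt.sub ?_ ?_)
    · exact (ContinuousAt.rpow_const (by fun_prop) (Or.inl hd.ne')).inv₀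
        (Real.rpow_pos_of_pos hd _).ne'
    · have hc2 : ContinuousAt (fun z => dist x (refl e l z)) y :=
        (continuous_const.dist hr).continuousAt
      exact (hc2.rpow_const (Or.inl (hd.trans hlt).ne')).inv₀
        (Real.rpow_pos_of_pos (hd.trans hlt) _).ne'
  have hφ : 0 < φ y := mul_pos hpos (sub_pos.2
    (inv_strictAnti₀ (Real.rpow_pos_of_pos hd _) (Real.rpow_lt_rpow hd.le hlt hna)))
  have ev1 : ∀ᶠ z in nhds y, φ y / 2 < φ z := hφc.eventually (lt_mem_nhds (by linarith))
  have ev2 : ∀ᶠ z in nhds y, inner ℝ e z < l := by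
    have : Continuous (fun z : EuclideanSpace ℝ (Fin n) => inner ℝ e z) := by fun_prop
    exact this.continuousAt.eventually (gt_mem_nhds hy)
  obtain ⟨ρ, hρ, hball⟩ := Metric.eventually_nhds_iff_ball.1 (ev1.and ev2)
  have h := pv_le (B := Metric.ball y ρ) (c := φ y / 2)
    hα hC he hU hanti hM hx hL hx0.le (fun y hy => by rw [hx0]; exact hmin y hy)
    (by linarith) measurableSet_ball measure_ball_lt_top.ne (fun z hz => (hball z hz).2)
    (fun z hz => by
      have := (hball z hz).1
      simp only [hx0, sub_zero, mul_zero, zero_mul]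
      exact this.le)
  have := real_ball_pos y hρ
  have : 0 < C * (φ y / 2) * volume.real (Metric.ball y ρ) / 2 := by positivity
  linarith

/-- Structural conditions on the nonlinearity along the solution. -/
structure Nonlin (α : ℝ) (u v F : EuclideanSpace ℝ (Fin n) → ℝ) : Prop where
  b1 : ∃ K : ℝ, 0 ≤ K ∧ ∀ x y, u y < u x → K * ((u y - u x) + min (v y - v x) 0) ≤ F y - F x
  b2 : ∀ κ : ℝ, 0 < κ → ∃ M0 : ℝ, ∀ x y, M0 ≤ ‖x‖ → u y < u x →
    κ * ‖x‖ ^ (-α) * ((u y - u x) + min (v y - v x) 0) ≤ F y - F x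
  b3 : ∀ x y, u y = u x → v x ≤ v y → F x ≤ F y
  b4 : ∀ x y, u y = u x → F x = F y → v x = v y

/-- Regularity and decay of one component. -/
structure Comp (α C : ℝ) (u F : EuclideanSpace ℝ (Fin n) → ℝ) : Prop where
  cont : Continuous u
  pos : ∀ x, 0 < u x
  bdd : ∃ M : ℝ, ∀ x, u x ≤ M
  decay : Tendsto u (cocompact _) (nhds 0)
  eq : IsFracLap n α C u F

lemma anti_diff (he : ‖e‖ = 1) (l : ℝ) (u : EuclideanSpace ℝ (Fin n) → ℝ) (y) :
    (fun z => u (refl e l z) - u z) (refl e l y) = - (fun z => u (refl e l z) - u z) y := by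
  simp only [refl_refl he]; ring

lemma Comp.bdd_diff {α C : ℝ} {u F : EuclideanSpace ℝ (Fin n) → ℝ} (h : Comp α C u F) (l : ℝ) :
    ∃ M, (∀ x, |u x| ≤ M) ∧ ∀ x, |(fun z => u (refl e l z) - u z) x| ≤ M := by
  obtain ⟨M, hM⟩ := h.bdd
  refine ⟨M, fun x => ?_, fun x => ?_⟩
  · rw [abs_of_pos (h.pos x)]; exact hM x
  · have := h.pos x; have := h.pos (refl e l x); have := hM x; have := hM (refl e l x)
    rw [abs_le]; constructor <;> simp only <;> linarith

lemma Comp.cont_diff {α C : ℝ} {u F : EuclideanSpace ℝ (Fin n) → ℝ} (h : Comp α C u F) (l : ℝ) :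
    Continuous (fun z => u (refl e l z) - u z) :=
  (h.cont.comp (continuous_refl l)).sub h.cont

noncomputable def c0 (n : ℕ) (α C : ℝ) : ℝ :=
  C * (volume : Measure (EuclideanSpace ℝ (Fin n))).real (Metric.ball 0 1) * (3 ^ ((n:ℝ) + α))⁻¹

lemma c0_pos {α C : ℝ} (hC : 0 < C) : 0 < c0 n α C := by
  have := real_ball_pos (0 : EuclideanSpace ℝ (Fin n)) one_pos
  unfold c0; positivity

lemma no_neg_min [NeZero n] {α C : ℝ} (hα : 0 < α) (hC : 0 < C) (he : ‖e‖ = 1)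
    {u v F : EuclideanSpace ℝ (Fin n) → ℝ} (hu : Comp α C u F) {l : ℝ}
    (H : ∀ x, inner ℝ e x < l → u (refl e l x) < u x →
      (c0 n α C / 4) * (l - inner ℝ e x) ^ (-α) *
        ((u (refl e l x) - u x) + min (v (refl e l x) - v x) 0) ≤ F (refl e l x) - F x)
    {x : EuclideanSpace ℝ (Fin n)} (hx : inner ℝ e x < l) (hneg : u (refl e l x) - u x < 0)
    (huv : u (refl e l x) - u x ≤ v (refl e l x) - v x)
    (hmin : ∀ y, inner ℝ e y ≤ l → u (refl e l x) - u x ≤ u (refl e l y) - u y) : False := by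
  obtain ⟨M, hM1, hM2⟩ := hu.bdd_diff (e := e) l
  have h1 := pv_neg_min hα hC he (hu.cont_diff (e := e) l) (anti_diff he l u) hM2 hx
    (tendsto_diff hα hu.cont hM1 hu.eq he l x) hneg.le hmin
  have h2 := H x hx (by linarith)
  change _ ≤ c0 n α C * _ * _ at h1
  have hc := c0_pos (n := n) (α := α) hC
  have hδ : 0 < (l - inner ℝ e x) ^ (-α) := Real.rpow_pos_of_pos (sub_pos.2 hx) _
  have h3 : u (refl e l x) - u x ≤ min (v (refl e l x) - v x) 0 := le_min huv hneg.le
  have hp := mul_pos hc hδ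
  set m := u (refl e l x) - u x
  set w := min (v (refl e l x) - v x) 0
  have h4 : c0 n α C * (l - inner ℝ e x) ^ (-α) * (m + m) ≤
    c0 n α C * (l - inner ℝ e x) ^ (-α) * (m + w) := mul_le_mul_of_nonneg_left (by linarith) hp.le
  have h5 : c0 n α C * (l - inner ℝ e x) ^ (-α) * m < 0 := mul_neg_of_pos_of_neg hp hneg
  linarith

/-- `e`-monotonicity for the plane at `l`. -/
def Good (e : EuclideanSpace ℝ (Fin n)) (u v : EuclideanSpace ℝ (Fin n) → ℝ) (l : ℝ) : Prop :=
  ∀ x, inner ℝ e x ≤ l → u x ≤ u (refl e l x) ∧ v x ≤ v (refl e l x)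

lemma refl_eq_self {l : ℝ} {x : EuclideanSpace ℝ (Fin n)} (h : inner ℝ e x = l) :
    refl e l x = x := by
  unfold refl; rw [h]; simp

lemma Comp.decay_diff {α C : ℝ} {u F : EuclideanSpace ℝ (Fin n) → ℝ} (h : Comp α C u F)
    (he : ‖e‖ = 1) (l : ℝ) :
    Tendsto (fun z => u (refl e l z) - u z) (cocompact _) (nhds 0) := by
  have ht : Tendsto (refl e l) (cocompact _) (cocompact _) :=
    (Homeomorph.mk (Equiv.mk (refl e l) (refl e l) (refl_refl he l) (refl_refl he l))
    (continuous_refl l) (continuous_refl l)).isClosedEmbedding.tendsto_cocompact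
  simpa using (h.decay.comp ht).sub h.decay

lemma good_of [NeZero n] {α C : ℝ} (hα : 0 < α) (hC : 0 < C) (he : ‖e‖ = 1)
    {u v F G : EuclideanSpace ℝ (Fin n) → ℝ} (hu : Comp α C u F) (hv : Comp α C v G) {l : ℝ}
    (Hu : ∀ x, inner ℝ e x < l → u (refl e l x) < u x →
      (c0 n α C / 4) * (l - inner ℝ e x) ^ (-α) *
        ((u (refl e l x) - u x) + min (v (refl e l x) - v x) 0) ≤ F (refl e l x) - F x)
    (Hv : ∀ x, inner ℝ e x < l → v (refl e l x) < v x →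
      (c0 n α C / 4) * (l - inner ℝ e x) ^ (-α) *
        ((v (refl e l x) - v x) + min (u (refl e l x) - u x) 0) ≤ G (refl e l x) - G x) :
    Good e u v l := by
  set U := fun z => u (refl e l z) - u z with hU
  set V := fun z => v (refl e l z) - v z with hV
  by_contra hng
  obtain ⟨x1, hx1, hx1'⟩ : ∃ x1, inner ℝ e x1 ≤ l ∧ min (U x1) (V x1) < 0 := by
    by_contra hcon
    push Not at hcon
    apply hng
    intro x hx
    have := le_min_iff.1 (hcon x hx)
    simp only [hU, hV, sub_nonneg] at this
    exact this
  have hWc : Continuous (fun x => min (U x) (V x)) :=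
    (hu.cont_diff (e := e) l).min (hv.cont_diff (e := e) l)
  have hW0 : Tendsto (fun x => min (U x) (V x)) (cocompact _) (nhds 0) := by
    simpa using (hu.decay_diff he l).min (hv.decay_diff he l)
  have hcl : IsClosed {x : EuclideanSpace ℝ (Fin n) | inner ℝ e x ≤ l} :=
    isClosed_le (by fun_prop) continuous_const
  obtain ⟨x, hx, hxmin⟩ := hWc.continuousOn.exists_isMinOn' hcl (x₀ := x1) hx1
    (((hW0.eventually (lt_mem_nhds hx1')).mono fun _ h => h.le).filter_mono inf_le_left)
  have hx : inner ℝ e x ≤ l := hx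
  have hmin : ∀ y, inner ℝ e y ≤ l → min (U x) (V x) ≤ min (U y) (V y) := fun y hy => hxmin hy
  have hneg : min (U x) (V x) < 0 := (hmin x1 hx1).trans_lt hx1'
  have hxl : inner ℝ e x < l := by
    refine lt_of_le_of_ne hx fun h => ?_
    simp [hU, hV, refl_eq_self h] at hneg
  rcases le_total (U x) (V x) with h | h
  · rw [min_eq_left h] at hneg hmin
    exact no_neg_min hα hC he hu Hu hxl hneg h fun y hy => (hmin y hy).trans (min_le_left _ _)
  · rw [min_eq_right h] at hneg hmin
    exact no_neg_min hα hC he hv Hv hxl hneg h fun y hy => (hmin y hy).trans (min_le_right _ _)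

lemma neg_comb {a b : ℝ} (h : a < 0) : a + min b 0 ≤ 0 := by
  have := min_le_right b 0; linarith

/-- Far-away estimate usable in `good_of`. -/
lemma far_est {α C : ℝ} (hα : 0 < α) (hC : 0 < C)
    {u v F : EuclideanSpace ℝ (Fin n) → ℝ} (hF : Nonlin α u v F) :
    ∃ M0 : ℝ, ∀ l x, inner ℝ e x < l → l - inner ℝ e x ≤ 2 * ‖x‖ → M0 ≤ ‖x‖ →
      u (refl e l x) < u x → (c0 n α C / 4) * (l - inner ℝ e x) ^ (-α) *
        ((u (refl e l x) - u x) + min (v (refl e l x) - v x) 0) ≤ F (refl e l x) - F x := by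
  have hc := c0_pos (n := n) (α := α) hC
  obtain ⟨M0, h⟩ := hF.b2 (c0 n α C / 4 * 2 ^ (-α)) (by positivity)
  refine ⟨M0, fun l x hx hd hM hlt => le_trans ?_ (h x _ hM hlt)⟩
  refine mul_le_mul_of_nonpos_right ?_ (neg_comb (by linarith))
  have hδ := sub_pos.2 hx
  rw [mul_assoc, ← Real.mul_rpow (by norm_num) (norm_nonneg x)]
  refine mul_le_mul_of_nonneg_left ?_ (by positivity)
  exact Real.rpow_le_rpow_of_nonpos hδ hd (by linarith)

/-- Near-plane estimate usable in `good_of`. -/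
lemma near_est {α C : ℝ} (hα : 0 < α) (hC : 0 < C)
    {u v F : EuclideanSpace ℝ (Fin n) → ℝ} (hF : Nonlin α u v F) :
    ∃ η : ℝ, 0 < η ∧ ∀ l x, inner ℝ e x < l → l - inner ℝ e x ≤ η →
      u (refl e l x) < u x → (c0 n α C / 4) * (l - inner ℝ e x) ^ (-α) *
        ((u (refl e l x) - u x) + min (v (refl e l x) - v x) 0) ≤ F (refl e l x) - F x := by
  have hc := c0_pos (n := n) (α := α) hC
  obtain ⟨K, hK, h⟩ := hF.b1
  obtain ⟨η, hη, hη'⟩ : ∃ η : ℝ, 0 < η ∧ K ≤ (c0 n α C / 4) * η ^ (-α) := by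
    refine ⟨((K + 1) / (c0 n α C / 4)) ^ (-(1 / α)), by positivity, ?_⟩
    rw [← Real.rpow_mul (by positivity)]
    have : -(1 / α) * -α = 1 := by field_simp
    rw [this, Real.rpow_one, mul_div_cancel₀ _ (by positivity)]
    linarith
  refine ⟨η, hη, fun l x hx hd hlt => le_trans ?_ (h x _ hlt)⟩
  refine mul_le_mul_of_nonpos_right (hη'.trans ?_) (neg_comb (by linarith))
  refine mul_le_mul_of_nonneg_left ?_ (by positivity)
  exact Real.rpow_le_rpow_of_nonpos (sub_pos.2 hx) hd (by linarith)

lemma abs_inner_le (he : ‖e‖ = 1) (x : EuclideanSpace ℝ (Fin n)) : |inner ℝ e x| ≤ ‖x‖ := by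
  have := abs_real_inner_le_norm e x
  rwa [he, one_mul] at this

lemma start [NeZero n] {α C : ℝ} (hα : 0 < α) (hC : 0 < C) (he : ‖e‖ = 1)
    {u v F G : EuclideanSpace ℝ (Fin n) → ℝ} (hu : Comp α C u F) (hv : Comp α C v G)
    (hF : Nonlin α u v F) (hG : Nonlin α v u G) :
    ∃ l0 : ℝ, ∀ l ≤ l0, Good e u v l := by
  obtain ⟨M1, h1⟩ := far_est (e := e) hα hC hF
  obtain ⟨M2, h2⟩ := far_est (e := e) hα hC hG
  refine ⟨min 0 (min (-M1) (-M2)), fun l hl => ?_⟩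
  simp only [le_min_iff] at hl
  refine good_of hα hC he hu hv (fun x hx => h1 l x hx ?_ ?_) (fun x hx => h2 l x hx ?_ ?_) <;>
  · have := abs_le.1 (abs_inner_le he x)
    linarith [norm_nonneg x]

lemma continue_step [NeZero n] {α C : ℝ} (hα : 0 < α) (hC : 0 < C) (he : ‖e‖ = 1)
    {u v F G : EuclideanSpace ℝ (Fin n) → ℝ} (hu : Comp α C u F) (hv : Comp α C v G)
    (hF : Nonlin α u v F) (hG : Nonlin α v u G) {l0 : ℝ}
    (hpos : ∀ x, inner ℝ e x < l0 → u x < u (refl e l0 x) ∧ v x < v (refl e l0 x)) :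
    ∃ l1 > l0, ∀ l, l0 ≤ l → l ≤ l1 → Good e u v l := by
  obtain ⟨M1, h1⟩ := far_est (e := e) hα hC hF
  obtain ⟨M2, h2⟩ := far_est (e := e) hα hC hG
  obtain ⟨η1, hη1, k1⟩ := near_est (e := e) hα hC hF
  obtain ⟨η2, hη2, k2⟩ := near_est (e := e) hα hC hG
  set M := max (|l0| + 1) (max M1 M2) with hM
  set η := min η1 η2 with hη
  have hη0 : 0 < η := lt_min hη1 hη2
  have hKc : IsCompact {x : EuclideanSpace ℝ (Fin n) | ‖x‖ ≤ M ∧ inner ℝ e x ≤ l0 - η / 2} := by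
    refine (isCompact_closedBall (0 : EuclideanSpace ℝ (Fin n)) M).of_isClosed_subset ?_ ?_
    · have c1 : IsClosed {x : EuclideanSpace ℝ (Fin n) | ‖x‖ ≤ M} :=
        isClosed_le continuous_norm continuous_const
      have c2 : IsClosed {x : EuclideanSpace ℝ (Fin n) | inner ℝ e x ≤ l0 - η / 2} :=
        isClosed_le (by fun_prop) continuous_const
      exact c1.inter c2
    · intro x hx; simpa using hx.1
  have hev := hKc.eventually_forall_of_forall_eventually (x₀ := l0)
    (P := fun l x => u x < u (refl e l x) ∧ v x < v (refl e l x)) (fun x hx => by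
      have hp := hpos x (by have := hx.2; linarith)
      have hc : Continuous (fun z : ℝ × EuclideanSpace ℝ (Fin n) => refl e z.1 z.2) :=
        continuous_refl_uncurry
      have c1 := hu.cont
      have c2 := hv.cont
      refine Filter.Eventually.and ?_ ?_
      · exact ContinuousAt.eventually_lt (c1.comp continuous_snd).continuousAt
          (c1.comp hc).continuousAt hp.1
      · exact ContinuousAt.eventually_lt (c2.comp continuous_snd).continuousAt
          (c2.comp hc).continuousAt hp.2)
  obtain ⟨ρ, hρ, hball⟩ := Metric.eventually_nhds_iff.1 hev
  refine ⟨l0 + min 1 (min (η / 2) (ρ / 2)), by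
    have : 0 < min 1 (min (η / 2) (ρ / 2)) := by positivity
    linarith, fun l hl hl1 => ?_⟩
  have hle1 : l ≤ l0 + 1 := hl1.trans (by gcongr; exact min_le_left _ _)
  have hle2 : l ≤ l0 + η / 2 :=
    hl1.trans (by gcongr; exact (min_le_right _ _).trans (min_le_left _ _))
  have hle3 : l ≤ l0 + ρ / 2 :=
    hl1.trans (by gcongr; exact (min_le_right _ _).trans (min_le_right _ _))
  have hg := hball (y := l) (by rw [Real.dist_eq, abs_of_nonneg (by linarith)]; linarith)
  have far : ∀ x : EuclideanSpace ℝ (Fin n), M ≤ ‖x‖ → l - inner ℝ e x ≤ 2 * ‖x‖ := by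
    intro x hx
    have := abs_le.1 (abs_inner_le he x)
    have h3 : |l0| + 1 ≤ M := le_max_left _ _
    have := le_abs_self l0
    linarith
  have hM1 : M1 ≤ M := (le_max_left _ _).trans (le_max_right _ _)
  have hM2 : M2 ≤ M := (le_max_right _ _).trans (le_max_right _ _)
  refine good_of hα hC he hu hv (fun x hx hlt => ?_) (fun x hx hlt => ?_)
  · rcases le_total M ‖x‖ with h | h
    · exact h1 l x hx (far x h) (hM1.trans h) hlt
    · rcases le_total (l - inner ℝ e x) η with h' | h'
      · exact k1 l x hx (h'.trans (min_le_left _ _)) hlt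
      · have := (hg x ⟨h, by linarith⟩).1
        linarith
  · rcases le_total M ‖x‖ with h | h
    · exact h2 l x hx (far x h) (hM2.trans h) hlt
    · rcases le_total (l - inner ℝ e x) η with h' | h'
      · exact k2 l x hx (h'.trans (min_le_right _ _)) hlt
      · have := (hg x ⟨h, by linarith⟩).2
        linarith

/-- Strong maximum principle for one component. -/
lemma pos_or_zero [NeZero n] {α C : ℝ} (hα : 0 < α) (hC : 0 < C) (he : ‖e‖ = 1)
    {u v F : EuclideanSpace ℝ (Fin n) → ℝ} (hu : Comp α C u F)
    (hF : Nonlin α u v F) {l : ℝ}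
    (hgu : ∀ x, inner ℝ e x ≤ l → u x ≤ u (refl e l x))
    (hgv : ∀ x, inner ℝ e x ≤ l → v x ≤ v (refl e l x)) :
    (∀ x, inner ℝ e x < l → u x < u (refl e l x)) ∨
    (∀ x, inner ℝ e x < l → u (refl e l x) = u x ∧ v (refl e l x) = v x) := by
  by_cases hcase : ∀ x, inner ℝ e x < l → u x < u (refl e l x)
  · exact Or.inl hcase
  right
  push Not at hcase
  obtain ⟨x, hx, hxle⟩ := hcase
  have hx0 : u (refl e l x) = u x := le_antisymm hxle (hgu x hx.le)
  obtain ⟨M, hM1, hM2⟩ := hu.bdd_diff (e := e) l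
  have hz := strong_max hα hC he (hu.cont_diff (e := e) l) (anti_diff he l u) hM2 hx
    (tendsto_diff hα hu.cont hM1 hu.eq he l x) (sub_eq_zero.2 hx0)
    (fun y hy => sub_nonneg.2 (hgu y hy)) (sub_nonneg.2 (hF.b3 _ _ hx0 (hgv x hx.le)))
  have huz : ∀ y, u (refl e l y) = u y := by
    intro y
    rcases lt_trichotomy (inner ℝ e y) l with h | h | h
    · exact sub_eq_zero.1 (hz y h)
    · rw [refl_eq_self h]
    · have := sub_eq_zero.1 (hz (refl e l y) (by rw [inner_refl he]; linarith))
      rw [refl_refl he] at this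
      exact this.symm
  intro y hy
  refine ⟨huz y, ?_⟩
  have hlim := tendsto_diff hα hu.cont hM1 hu.eq he l y
  have hzero : (fun ε : ℝ => C * ∫ z, trunc α (fun z => u (refl e l z) - u z) y ε z) =
      fun _ => 0 := by
    funext ε
    have : trunc α (fun z => u (refl e l z) - u z) y ε = fun _ => 0 := by
      funext z
      unfold trunc
      simp [huz]
    rw [this]; simp
  rw [hzero] at hlim
  have := tendsto_nhds_unique hlim tendsto_const_nhds
  exact (hF.b4 y (refl e l y) (huz y) (by linarith)).symm

/-- Existence of a symmetry hyperplane in every direction. -/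
lemma exists_plane [NeZero n] {α C : ℝ} (hα : 0 < α) (hC : 0 < C) (he : ‖e‖ = 1)
    {u v F G : EuclideanSpace ℝ (Fin n) → ℝ} (hu : Comp α C u F) (hv : Comp α C v G)
    (hF : Nonlin α u v F) (hG : Nonlin α v u G) :
    ∃ l : ℝ, ∀ x, u (refl e l x) = u x ∧ v (refl e l x) = v x := by
  set S : Set ℝ := {l | ∀ m ≤ l, Good e u v m} with hS
  have hne : S.Nonempty := start hα hC he hu hv hF hG
  have hbdd : BddAbove S := by
    have ev := hu.decay.eventually (gt_mem_nhds (hu.pos 0))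
    rw [← Metric.cobounded_eq_cocompact, ← comap_norm_atTop, eventually_comap] at ev
    obtain ⟨R, hR⟩ := eventually_atTop.1 ev
    refine ⟨max 0 R, fun l hl => ?_⟩
    by_contra hlt
    push Not at hlt
    have hl0 : 0 < l := (le_max_left _ _).trans_lt hlt
    have hlR : R < l := (le_max_right _ _).trans_lt hlt
    have h := (hl l le_rfl 0 (by simpa using hl0.le)).1
    have hn : ‖refl e l 0‖ = 2 * l := by
      unfold refl
      simp [norm_smul, he, abs_of_pos hl0]
    have := hR (2 * l) (by linarith) (refl e l 0) hn
    linarith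
  set l := sSup S with hl
  have hlt : ∀ m < l, Good e u v m := by
    intro m hm
    obtain ⟨k, hk, hmk⟩ := exists_lt_of_lt_csSup hne hm
    exact hk m hmk.le
  have hgl : Good e u v l := by
    intro x hx
    rcases hx.lt_or_eq with h | h
    · have hc : Continuous (fun m : ℝ => refl e m x) := by unfold refl; fun_prop
      have ev : ∀ᶠ m in nhdsWithin l (Iio l), u x ≤ u (refl e m x) ∧ v x ≤ v (refl e m x) := by
        filter_upwards [Ioo_mem_nhdsLT h] with m hm
        exact hlt m hm.2 x hm.1.le
      exact ⟨ge_of_tendsto (((hu.cont.comp hc).tendsto l).mono_left nhdsWithin_le_nhds)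
          (ev.mono fun _ h => h.1),
        ge_of_tendsto (((hv.cont.comp hc).tendsto l).mono_left nhdsWithin_le_nhds)
          (ev.mono fun _ h => h.2)⟩
    · rw [refl_eq_self h]; exact ⟨le_rfl, le_rfl⟩
  have key : ∀ x, inner ℝ e x < l → u (refl e l x) = u x ∧ v (refl e l x) = v x := by
    rcases pos_or_zero hα hC he hu hF (fun x hx => (hgl x hx).1) (fun x hx => (hgl x hx).2)
      with h1 | h1
    · rcases pos_or_zero hα hC he hv hG (fun x hx => (hgl x hx).2) (fun x hx => (hgl x hx).1)
        with h2 | h2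
      · exfalso
        obtain ⟨l1, hl1, hg⟩ := continue_step hα hC he hu hv hF hG
          (fun x hx => ⟨h1 x hx, h2 x hx⟩)
        have : l1 ∈ S := by
          intro m hm
          rcases lt_or_ge m l with h | h
          · exact hlt m h
          · exact hg m h hm
        exact absurd (le_csSup hbdd this) (not_le.2 hl1)
      · exact fun x hx => (h2 x hx).symm
    · exact h1
  refine ⟨l, fun y => ?_⟩
  rcases lt_trichotomy (inner ℝ e y) l with h | h | h
  · exact key y h
  · rw [refl_eq_self h]; exact ⟨rfl, rfl⟩
  · have := key (refl e l y) (by rw [inner_refl he]; linarith)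
    rw [refl_refl he] at this
    exact ⟨this.1.symm, this.2.symm⟩

lemma exists_center {u : EuclideanSpace ℝ (Fin n) → ℝ} (hc : Continuous u)
    (hpos : ∀ x, 0 < u x) (hdec : Tendsto u (cocompact _) (nhds 0)) :
    ∃ x₀ : EuclideanSpace ℝ (Fin n), ∀ (e : EuclideanSpace ℝ (Fin n)) (l : ℝ), ‖e‖ = 1 →
      (∀ x, u (refl e l x) = u x) → inner ℝ e x₀ = l := by
  set t := u 0 / 2 with ht
  have ht0 : 0 < t := half_pos (hpos 0)
  set w : EuclideanSpace ℝ (Fin n) → ℝ := fun x => max (u x - t) 0 with hw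
  have hwc : Continuous w := by fun_prop
  have hwn : ∀ x, 0 ≤ w x := fun x => le_max_right _ _
  have hws : HasCompactSupport w := by
    obtain ⟨K, hK, hK2⟩ := mem_cocompact.1 (hdec.eventually (gt_mem_nhds ht0))
    refine HasCompactSupport.intro hK fun x hx => ?_
    have : u x < t := hK2 hx
    simp only [hw]; exact max_eq_right (by linarith)
  have iw : Integrable w := hwc.integrable_of_hasCompactSupport hws
  have iwy : Integrable (fun y => w y • y) :=
    (hwc.smul continuous_id).integrable_of_hasCompactSupport hws.smul_right
  have hW : 0 < ∫ y, w y := by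
    refine integral_pos_of_integrable_nonneg_nonzero (x := 0) hwc iw hwn ?_
    have : 0 < w 0 := lt_max_of_lt_left (by linarith)
    exact this.ne'
  refine ⟨(∫ y, w y)⁻¹ • ∫ y, w y • y, fun e l he hsym => ?_⟩
  rw [inner_smul_right, ← integral_inner iwy]
  have i2 : Integrable (fun y => inner ℝ e (w y • y)) := iwy.const_inner e
  have h1 : ∫ y, inner ℝ e (w (refl e l y) • refl e l y) = ∫ y, inner ℝ e (w y • y) :=
    (measurePreserving_refl he l).integral_comp (measurableEmbedding_refl he l)
      (fun y => inner ℝ e (w y • y))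
  have h2 : ∀ y, inner ℝ e (w (refl e l y) • refl e l y) =
      2 * l * w y - inner ℝ e (w y • y) := by
    intro y
    have : w (refl e l y) = w y := by simp only [hw, hsym]
    rw [this, inner_smul_right, inner_refl he, inner_smul_right]; ring
  simp_rw [h2] at h1
  rw [integral_sub (iw.const_mul _) i2, integral_const_mul] at h1
  have h3 : ∫ y, inner ℝ e (w y • y) = l * ∫ y, w y := by linarith
  rw [h3]
  field_simp

lemma radial [NeZero n] {α C : ℝ} (hα : 0 < α) (hC : 0 < C)
    {u v F G : EuclideanSpace ℝ (Fin n) → ℝ} (hu : Comp α C u F) (hv : Comp α C v G)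
    (hF : Nonlin α u v F) (hG : Nonlin α v u G) :
    ∃ x₀ : EuclideanSpace ℝ (Fin n), ∀ x y : EuclideanSpace ℝ (Fin n),
      ‖x - x₀‖ = ‖y - x₀‖ → u x = u y ∧ v x = v y := by
  obtain ⟨x₀, hx₀⟩ := exists_center hu.cont hu.pos hu.decay
  refine ⟨x₀, fun x y hxy => ?_⟩
  by_cases hne : x = y
  · subst hne; exact ⟨rfl, rfl⟩
  have hd : 0 < ‖x - y‖ := norm_pos_iff.2 (sub_ne_zero.2 hne)
  set e := ‖x - y‖⁻¹ • (x - y) with he'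
  have he : ‖e‖ = 1 := by rw [he', norm_smul, norm_inv, norm_norm, inv_mul_cancel₀ hd.ne']
  obtain ⟨l, hl⟩ := exists_plane hα hC he hu hv hF hG
  have hle := hx₀ e l he fun z => (hl z).1
  have hr : refl e l y = x := by
    unfold refl
    have h1 : 2 * (l - inner ℝ e y) = ‖x - y‖ := by
      rw [← hle, ← inner_sub_right, he', real_inner_smul_left]
      have h2 : inner ℝ (x - y) (x₀ - y) = ‖x - y‖ ^ 2 / 2 := by
        have h3 : x - y = (x - x₀) + (x₀ - y) := by abel
        have h4 := norm_add_sq_real (x - x₀) (x₀ - y)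
        rw [← h3] at h4
        have h5 : inner ℝ (x - y) (x₀ - y) = inner ℝ (x - x₀) (x₀ - y) + ‖x₀ - y‖ ^ 2 := by
          rw [← real_inner_self_eq_norm_sq (x₀ - y), ← inner_add_left, ← h3]
        rw [norm_sub_rev x₀ y, ← hxy] at h4 h5
        rw [h5]; linarith
      rw [h2]; field_simp
    rw [h1, he', smul_smul, mul_inv_cancel₀ hd.ne', one_smul]; abel
  have := hl y
  rw [hr] at this
  exact this

lemma comp_of {α C a R : ℝ} (ha : 0 < a) {u F : EuclideanSpace ℝ (Fin n) → ℝ}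
    (hc : Continuous u) (hpos : ∀ x, 0 < u x) (hR : ∀ x, R < ‖x‖ → u x ≤ ‖x‖ ^ (-a))
    (heq : IsFracLap n α C u F) : Comp α C u F := by
  have hdec : Tendsto u (cocompact _) (nhds 0) := by
    have h1 : Tendsto (fun x : EuclideanSpace ℝ (Fin n) => ‖x‖ ^ (-a)) (cocompact _) (nhds 0) :=
      (tendsto_rpow_neg_atTop ha).comp (tendsto_norm_cocompact_atTop (E := EuclideanSpace ℝ (Fin n)))
    refine tendsto_of_tendsto_of_tendsto_of_le_of_le' tendsto_const_nhds h1
      (Eventually.of_forall fun x => (hpos x).le) ?_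
    filter_upwards [(tendsto_norm_cocompact_atTop (E := EuclideanSpace ℝ (Fin n))).eventually (eventually_gt_atTop R)] with x hx
    exact hR x hx
  refine ⟨hc, hpos, ?_, hdec, heq⟩
  obtain ⟨K, hK, hK2⟩ := mem_cocompact.1 (hdec.eventually (gt_mem_nhds one_pos))
  obtain ⟨M, hM⟩ := hK.exists_bound_of_continuousOn hc.continuousOn
  refine ⟨max M 1, fun x => ?_⟩
  by_cases hx : x ∈ K
  · exact ((le_abs_self _).trans (hM x hx)).trans (le_max_left _ _)
  · have : u x < 1 := hK2 hx
    exact this.le.trans (le_max_right _ _)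

lemma combine {f : ℝ → ℝ → ℝ} {w w' z z' B : ℝ}
    (h1 : f w z - f w' z ≤ B * (w - w'))
    (h2 : z' < z → f w' z - f w' z' ≤ B * (z - z')) (h3 : z ≤ z' → f w' z ≤ f w' z') :
    B * ((w' - w) + min (z' - z) 0) ≤ f w' z' - f w z := by
  rcases lt_or_ge z' z with h | h
  · have := h2 h
    rw [min_eq_left (by linarith)]
    linarith
  · have := h3 h
    rw [min_eq_right (by linarith)]
    linarith

lemma mvt_le {φ : ℝ → ℝ} {x y B : ℝ} (hx : 0 < x) (hxy : x < y)
    (hd : ∀ t, 0 < t → DifferentiableAt ℝ φ t) (hB : ∀ t, x < t → t < y → deriv φ t ≤ B) :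
    φ y - φ x ≤ B * (y - x) := by
  refine Convex.image_sub_le_mul_sub_of_deriv_le (convex_Icc x y)
    (fun t ht => (hd t (hx.trans_le ht.1)).continuousAt.continuousWithinAt)
    (fun t ht => ?_) (fun t ht => ?_) x (left_mem_Icc.2 hxy.le) y (right_mem_Icc.2 hxy.le) hxy.le
  · rw [interior_Icc] at ht
    exact (hd t (hx.trans ht.1)).differentiableWithinAt
  · rw [interior_Icc] at ht
    exact hB t ht.1 ht.2

lemma pow_bound {a b p q α κ r w z γ : ℝ} (hw : 0 < w) (hz : 0 < z)
    (hp : 0 ≤ p) (hq : 0 ≤ q) (hr : 0 < r) (hwr : w ≤ r ^ (-a)) (hzr : z ≤ r ^ (-b))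
    (hγ : γ = a * p + b * q - α) (hκ : r ^ (-γ) ≤ κ) :
    w ^ p * z ^ q ≤ κ * r ^ (-α) := by
  calc w ^ p * z ^ q ≤ (r ^ (-a)) ^ p * (r ^ (-b)) ^ q :=
        mul_le_mul (Real.rpow_le_rpow hw.le hwr hp) (Real.rpow_le_rpow hz.le hzr hq)
          (by positivity) (by positivity)
    _ = r ^ (-γ) * r ^ (-α) := by
        rw [← Real.rpow_mul hr.le, ← Real.rpow_mul hr.le, ← Real.rpow_add hr, ← Real.rpow_add hr]
        congr 1; rw [hγ]; ring
    _ ≤ κ * r ^ (-α) := mul_le_mul_of_nonneg_right hκ (by positivity)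

lemma nonlin_of {α a b p q M Ru Rv δ : ℝ} (ha : 0 < a) (hb : 0 < b) (hp : 1 ≤ p) (hq : 1 ≤ q)
    {f : ℝ → ℝ → ℝ}
    (hf : ContDiffOn ℝ 1 (fun z : ℝ × ℝ => f z.1 z.2) (Ici (0:ℝ) ×ˢ Ici (0:ℝ)))
    {u v : EuclideanSpace ℝ (Fin n) → ℝ}
    (hupos : ∀ x, 0 < u x) (hvpos : ∀ x, 0 < v x) (huM : ∀ x, u x ≤ M) (hvM : ∀ x, v x ≤ M)
    (hRu : ∀ x, Ru < ‖x‖ → u x ≤ ‖x‖ ^ (-a)) (hRv : ∀ x, Rv < ‖x‖ → v x ≤ ‖x‖ ^ (-b))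
    (hδ : 0 < δ)
    (hd1 : ∀ w z : ℝ, 0 < w → 0 < z → w + z < δ → deriv (fun t => f t z) w ≤ w ^ (p - 1) * z ^ q)
    (hd2 : ∀ w z : ℝ, 0 < w → 0 < z → w + z < δ → deriv (fun t => f w t) z ≤ w ^ p * z ^ (q - 1))
    (hdp : ∀ w z : ℝ, 0 < w → 0 < z → 0 < deriv (fun t => f w t) z)
    (h1 : α < a * p + b * q - a) (h2 : α < a * p + b * q - b) :
    Nonlin α u v (fun x => f (u x) (v x)) := by
  have hdiff : ∀ w z : ℝ, 0 < w → 0 < z → DifferentiableAt ℝ (fun z : ℝ × ℝ => f z.1 z.2) (w, z) := by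
    intro w z hw hz
    refine (hf.contDiffAt (prod_mem_nhds (Ici_mem_nhds hw) (Ici_mem_nhds hz))).differentiableAt
      one_ne_zero
  have hdw : ∀ z, 0 < z → ∀ t, 0 < t → DifferentiableAt ℝ (fun t => f t z) t := by
    intro z hz t ht
    exact (hdiff t z ht hz).comp (f := fun t : ℝ => (t, z)) t (by fun_prop)
  have hdz : ∀ w, 0 < w → ∀ t, 0 < t → DifferentiableAt ℝ (fun t => f w t) t := by
    intro w hw t ht
    exact (hdiff w t hw ht).comp (f := fun t : ℝ => (w, t)) t (by fun_prop)
  have hmono : ∀ w, 0 < w → StrictMonoOn (fun t => f w t) (Ioi 0) := by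
    intro w hw
    refine strictMonoOn_of_deriv_pos (convex_Ioi 0)
      (fun t ht => (hdz w hw t ht).continuousAt.continuousWithinAt) fun t ht => ?_
    rw [interior_Ioi] at ht
    exact hdp w t hw ht
  refine ⟨?_, ?_, ?_, ?_⟩
  · obtain ⟨K, hK⟩ := (hf.mono (t := Icc 0 M ×ˢ Icc 0 M) (fun z hz => ⟨hz.1.1, hz.2.1⟩)
      ).exists_lipschitzOnWith one_ne_zero ((convex_Icc 0 M).prod (convex_Icc 0 M))
      (isCompact_Icc.prod isCompact_Icc)
    refine ⟨K, K.2, fun x y hxy => combine ?_ (fun h => ?_) (fun h => ?_)⟩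
    · have := hK.dist_le_mul (u x, v x) ⟨⟨(hupos x).le, huM x⟩, ⟨(hvpos x).le, hvM x⟩⟩
        (u y, v x) ⟨⟨(hupos y).le, huM y⟩, ⟨(hvpos x).le, hvM x⟩⟩
      rw [Prod.dist_eq, dist_self, max_eq_left dist_nonneg, Real.dist_eq, Real.dist_eq,
        abs_of_pos (sub_pos.2 hxy)] at this
      exact (le_abs_self _).trans this
    · have := hK.dist_le_mul (u y, v x) ⟨⟨(hupos y).le, huM y⟩, ⟨(hvpos x).le, hvM x⟩⟩
        (u y, v y) ⟨⟨(hupos y).le, huM y⟩, ⟨(hvpos y).le, hvM y⟩⟩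
      rw [Prod.dist_eq, dist_self, max_eq_right dist_nonneg, Real.dist_eq, Real.dist_eq,
        abs_of_pos (sub_pos.2 h)] at this
      exact (le_abs_self _).trans this
    · exact (hmono _ (hupos y)).monotoneOn (hvpos x) (hvpos y) h
  · intro κ hκ
    have t1 : Tendsto (fun r : ℝ => r ^ (-(a * (p - 1) + b * q - α))) atTop (nhds 0) :=
      tendsto_rpow_neg_atTop (by linarith)
    have t2 : Tendsto (fun r : ℝ => r ^ (-(a * p + b * (q - 1) - α))) atTop (nhds 0) :=
      tendsto_rpow_neg_atTop (by linarith)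
    have t3 : Tendsto (fun r : ℝ => r ^ (-a) + r ^ (-b)) atTop (nhds 0) := by
      simpa using (tendsto_rpow_neg_atTop ha).add (tendsto_rpow_neg_atTop hb)
    have ev := (((t1.eventually (gt_mem_nhds hκ)).and (t2.eventually (gt_mem_nhds hκ))).and
      (t3.eventually (gt_mem_nhds hδ))).and (((eventually_gt_atTop Ru).and
        (eventually_gt_atTop Rv)).and (eventually_gt_atTop (0:ℝ)))
    obtain ⟨M0, hM0⟩ := eventually_atTop.1 ev
    refine ⟨M0, fun x y hx hxy => ?_⟩
    obtain ⟨⟨⟨e1, e2⟩, e3⟩, ⟨e4, e5⟩, e6⟩ := hM0 _ hx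
    have bu := hRu x e4
    have bv := hRv x e5
    have hs : u x + v x < δ := by linarith
    refine combine ?_ (fun h => ?_) (fun h => ?_)
    · refine mvt_le (φ := fun t => f t (v x)) (hupos y) hxy (hdw _ (hvpos x)) fun t ht1 ht2 => ?_
      have ht0 := (hupos y).trans ht1
      exact (hd1 t (v x) ht0 (hvpos x) (by linarith)).trans
        (pow_bound ht0 (hvpos x) (by linarith) (by linarith) e6 (ht2.le.trans bu) bv rfl e1.le)
    · refine mvt_le (φ := fun t => f (u y) t) (hvpos y) h (hdz _ (hupos y)) fun t ht1 ht2 => ?_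
      have ht0 := (hvpos y).trans ht1
      exact (hd2 (u y) t (hupos y) ht0 (by linarith)).trans
        (pow_bound (hupos y) ht0 (by linarith) (by linarith) e6 (hxy.le.trans bu)
          (ht2.le.trans bv) rfl e2.le)
    · exact (hmono _ (hupos y)).monotoneOn (hvpos x) (hvpos y) h
  · intro x y hxy hv
    simp only [hxy]
    exact (hmono _ (hupos x)).monotoneOn (hvpos x) (hvpos y) hv
  · intro x y hxy hF
    simp only [hxy] at hF
    exact (hmono _ (hupos x)).injOn (hvpos x) (hvpos y) hF

end

end MP

/-- Main symmetry theorem (Theorem 1.1): decaying positive solutions of the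
coupled fractional Laplacian system are radially symmetric about some point. -/
theorem radial_symmetry_fractional_system {n : ℕ} [NeZero n] (α C a b p q r s : ℝ)
    (hα : α ∈ Ioo (0 : ℝ) 2) (hC : 0 < C) (ha : 0 < a) (hb : 0 < b)
    (hp : 1 ≤ p) (hq : 1 ≤ q) (hr : 1 ≤ r) (hs : 1 ≤ s)
    (f g : ℝ → ℝ → ℝ)
    (hf : ContDiffOn ℝ 1 (fun z : ℝ × ℝ => f z.1 z.2) (Ici (0:ℝ) ×ˢ Ici (0:ℝ)))
    (hg : ContDiffOn ℝ 1 (fun z : ℝ × ℝ => g z.1 z.2) (Ici (0:ℝ) ×ˢ Ici (0:ℝ)))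
    (u v : EuclideanSpace ℝ (Fin n) → ℝ)
    (hupos : ∀ x, 0 < u x) (hvpos : ∀ x, 0 < v x)
    (huL : MemLalpha n α u) (hvL : MemLalpha n α v)
    (huC : C11loc u) (hvC : C11loc v)
    (hequ : IsFracLap n α C u (fun x => f (u x) (v x)))
    (heqv : IsFracLap n α C v (fun x => g (u x) (v x)))
    (hdecu : ∃ R : ℝ, ∀ x, R < ‖x‖ → u x ≤ ‖x‖ ^ (-a))
    (hdecv : ∃ R : ℝ, ∀ x, R < ‖x‖ → v x ≤ ‖x‖ ^ (-b))
    (hii : ∃ δ > (0:ℝ), ∀ w z : ℝ, 0 < w → 0 < z → w + z < δ →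
      deriv (fun t => f t z) w ≤ w ^ (p - 1) * z ^ q ∧
      deriv (fun t => g w t) z ≤ w ^ r * z ^ (s - 1))
    (hiii : ∃ δ > (0:ℝ), ∀ w z : ℝ, 0 < w → 0 < z → w + z < δ →
      deriv (fun t => f w t) z ≤ w ^ p * z ^ (q - 1) ∧
      deriv (fun t => g t z) w ≤ w ^ (r - 1) * z ^ s)
    (hiv : ∀ w z : ℝ, 0 < w → 0 < z →
      0 < deriv (fun t => f w t) z ∧ 0 < deriv (fun t => g t z) w)
    (hv5 : α < a * p + b * q - a ∧ α < a * p + b * q - b ∧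
      α < a * r + b * s - a ∧ α < a * r + b * s - b) :
    ∃ x₀ : EuclideanSpace ℝ (Fin n), ∀ x y : EuclideanSpace ℝ (Fin n),
      ‖x - x₀‖ = ‖y - x₀‖ → u x = u y ∧ v x = v y := by
  obtain ⟨Ru, hRu⟩ := hdecu
  obtain ⟨Rv, hRv⟩ := hdecv
  obtain ⟨δ1, hδ1, h1⟩ := hii
  obtain ⟨δ2, hδ2, h2⟩ := hiii
  have cu := MP.comp_of (F := fun x => f (u x) (v x)) ha huC.1.continuous hupos hRu hequ
  have cv := MP.comp_of (F := fun x => g (u x) (v x)) hb hvC.1.continuous hvpos hRv heqv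
  obtain ⟨Mu, hMu⟩ := cu.bdd
  obtain ⟨Mv, hMv⟩ := cv.bdd
  have huM : ∀ x, u x ≤ max Mu Mv := fun x => (hMu x).trans (le_max_left _ _)
  have hvM : ∀ x, v x ≤ max Mu Mv := fun x => (hMv x).trans (le_max_right _ _)
  have hδ : 0 < min δ1 δ2 := lt_min hδ1 hδ2
  have nf : MP.Nonlin α u v (fun x => f (u x) (v x)) :=
    MP.nonlin_of ha hb hp hq hf hupos hvpos huM hvM hRu hRv hδ
      (fun w z hw hz h => (h1 w z hw hz (h.trans_le (min_le_left _ _))).1)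
      (fun w z hw hz h => (h2 w z hw hz (h.trans_le (min_le_right _ _))).1)
      (fun w z hw hz => (hiv w z hw hz).1) hv5.1 hv5.2.1
  have hg' : ContDiffOn ℝ 1 (fun z : ℝ × ℝ => (fun s t => g t s) z.1 z.2)
      (Ici (0:ℝ) ×ˢ Ici (0:ℝ)) :=
    hg.comp (g := fun z : ℝ × ℝ => g z.1 z.2) (f := fun z : ℝ × ℝ => (z.2, z.1))
      (by fun_prop) (fun z hz => ⟨hz.2, hz.1⟩)
  have ng : MP.Nonlin α v u (fun x => g (u x) (v x)) :=
    MP.nonlin_of (f := fun s t => g t s) hb ha hs hr hg' hvpos hupos hvM huM hRv hRu hδ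
      (fun w z hw hz h => by
        have := (h1 z w hz hw (by linarith [h.trans_le (min_le_left _ _)])).2
        rwa [mul_comm] at this)
      (fun w z hw hz h => by
        have := (h2 z w hz hw (by linarith [h.trans_le (min_le_right _ _)])).2
        rwa [mul_comm] at this)
      (fun w z hw hz => (hiv z w hz hw).2) (by linarith [hv5.2.2.2]) (by linarith [hv5.2.2.1])
  exact MP.radial hα.1 hC cu cv nf ng
end

section
/- Fractional Schrödinger system symmetry: Let α ∈ (0,2), and let (u,v) ∈ (L_α ∩ C^{1,1}_{loc}(ℝ^n))² be a positive solution of (−Δ)^{α/2}u = Σ_{i=1}^N u^{p_i}v^{q_i}, (−Δ)^{α/2}v = Σ_{i=1}^N u^{r_i}v^{s_i}, where p_i, q_i, r_i, s_i ≥ 1. Set p = min p_i, q = min q_i, r = min r_i, s = min s_i. If u(x) ≲ |x|^{−a}, v(x) ≲ |x|^{−b} as |x| → ∞ with a, b > 0 and α < min{ap+bq−a, ap+bq−b, ar+bs−a, ar+bs−b}, then u and v are radially symmetric about a common point x₀ ∈ ℝ^n. -/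
open Set MeasureTheory Filter

noncomputable section FracAux

variable {n : ℕ}

/-- reflection across the hyperplane `⟪e,x⟫ = l` -/
def hrefl (e : EuclideanSpace ℝ (Fin n)) (l : ℝ) (x : EuclideanSpace ℝ (Fin n)) :
    EuclideanSpace ℝ (Fin n) := x + (2 * (l - inner ℝ e x)) • e

lemma hrefl_inner {e : EuclideanSpace ℝ (Fin n)} (he : ‖e‖ = 1) (l : ℝ) (x) :
    inner ℝ e (hrefl e l x) = 2 * l - inner ℝ e x := by
  simp only [hrefl, inner_add_right, inner_smul_right, real_inner_self_eq_norm_sq, he]; ring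

lemma hrefl_hrefl {e : EuclideanSpace ℝ (Fin n)} (he : ‖e‖ = 1) (l : ℝ) (x) :
    hrefl e l (hrefl e l x) = x := by
  have h := hrefl_inner he l x
  rw [hrefl, h, hrefl, add_assoc, ← add_smul]
  have : (2 * (l - inner ℝ e x) + 2 * (l - (2 * l - inner ℝ e x))) = 0 := by ring
  rw [this]; simp

lemma dist_sq_hrefl {e : EuclideanSpace ℝ (Fin n)} (he : ‖e‖ = 1) (l : ℝ) (x y) :
    dist x (hrefl e l y) ^ 2 =
      dist x y ^ 2 + 4 * (l - inner ℝ e x) * (l - inner ℝ e y) := by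
  have h1 : x - hrefl e l y = (x - y) - (2 * (l - inner ℝ e y)) • e := by
    rw [hrefl]; abel
  rw [dist_eq_norm, dist_eq_norm, h1, norm_sub_sq_real, inner_smul_right, norm_smul, he,
    inner_sub_left, real_inner_comm e x, real_inner_comm e y, mul_one, Real.norm_eq_abs, sq_abs]
  ring

lemma dist_hrefl_hrefl {e : EuclideanSpace ℝ (Fin n)} (he : ‖e‖ = 1) (l : ℝ) (x y) :
    dist (hrefl e l x) (hrefl e l y) = dist x y := by
  have h : dist (hrefl e l x) (hrefl e l y) ^ 2 = dist x y ^ 2 := by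
    rw [dist_sq_hrefl he, hrefl_inner he, dist_comm, dist_sq_hrefl he, dist_comm y x]
    ring
  exact (sq_eq_sq₀ dist_nonneg dist_nonneg).1 h

lemma dist_hrefl_comm {e : EuclideanSpace ℝ (Fin n)} (he : ‖e‖ = 1) (l : ℝ) (x y) :
    dist (hrefl e l x) y = dist x (hrefl e l y) := by
  conv_lhs => rw [← hrefl_hrefl he l y]
  exact dist_hrefl_hrefl he l _ _

lemma dist_self_hrefl {e : EuclideanSpace ℝ (Fin n)} (he : ‖e‖ = 1) (l : ℝ) (x) 
    (hx : inner ℝ e x ≤ l) :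
    dist x (hrefl e l x) = 2 * (l - inner ℝ e x) := by
  rw [hrefl, dist_self_add_right, norm_smul, he, mul_one, Real.norm_of_nonneg]; linarith

lemma continuous_hrefl2 (e : EuclideanSpace ℝ (Fin n)) :
    Continuous (fun z : ℝ × EuclideanSpace ℝ (Fin n) => hrefl e z.1 z.2) := by
  unfold hrefl; fun_prop

lemma continuous_hrefl (e : EuclideanSpace ℝ (Fin n)) (l : ℝ) : Continuous (hrefl e l) := by
  unfold hrefl; fun_prop

def rflE {e : EuclideanSpace ℝ (Fin n)} (he : ‖e‖ = 1) (l : ℝ) :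
    EuclideanSpace ℝ (Fin n) ≃ₜ EuclideanSpace ℝ (Fin n) where
  toFun := hrefl e l
  invFun := hrefl e l
  left_inv := hrefl_hrefl he l
  right_inv := hrefl_hrefl he l
  continuous_toFun := continuous_hrefl e l
  continuous_invFun := continuous_hrefl e l

lemma mp_hrefl {e : EuclideanSpace ℝ (Fin n)} (he : ‖e‖ = 1) (l : ℝ) :
    MeasurePreserving (hrefl e l) := by
  have h1 := (LinearIsometryEquiv.measurePreserving
    ((Submodule.span ℝ {e})ᗮ.reflection))
  have h2 := (measurePreserving_add_right (volume : Measure (EuclideanSpace ℝ (Fin n)))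
    ((2 * l) • e)).comp h1
  have h3 : hrefl e l = (fun x => x + (2 * l) • e) ∘ ((Submodule.span ℝ {e})ᗮ.reflection) := by
    funext x
    simp only [Function.comp, Submodule.reflection_orthogonal_apply,
      Submodule.reflection_singleton_apply, hrefl]
    simp only [he, sub_smul, mul_sub, mul_smul, two_smul]
    simp
    abel
  rw [h3]; exact h2

lemma me_hrefl {e : EuclideanSpace ℝ (Fin n)} (he : ‖e‖ = 1) (l : ℝ) :
    MeasurableEmbedding (hrefl e l) := (rflE he l).measurableEmbedding

lemma setInt_hrefl {e : EuclideanSpace ℝ (Fin n)} (he : ‖e‖ = 1) (l : ℝ)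
    (g : EuclideanSpace ℝ (Fin n) → ℝ) (s : Set (EuclideanSpace ℝ (Fin n))) :
    ∫ y in hrefl e l ⁻¹' s, g (hrefl e l y) = ∫ y in s, g y :=
  (mp_hrefl he l).setIntegral_preimage_emb (me_hrefl he l) g s

lemma kernel_int {α : ℝ} (hα : 0 < α) (x : EuclideanSpace ℝ (Fin n)) {ε : ℝ} (hε : 0 < ε) :
    IntegrableOn (fun y => 1 / dist x y ^ ((n : ℝ) + α)) {y | ε ≤ dist x y} := by
  have hs : 0 < (n : ℝ) + α := by positivity
  have h0 : Integrable (fun y : EuclideanSpace ℝ (Fin n) => (1 + ‖y‖) ^ (-((n : ℝ) + α))) :=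
    integrable_one_add_norm (by simp [hα])
  have h1 := (h0.comp_sub_left x).const_mul ((1 + 1 / ε) ^ ((n : ℝ) + α))
  refine (h1.integrableOn (s := {y | ε ≤ dist x y})).mono' ?_ ?_
  · apply Measurable.aestronglyMeasurable
    fun_prop
  · have hm : MeasurableSet {y : EuclideanSpace ℝ (Fin n) | ε ≤ dist x y} :=
      (isClosed_le continuous_const (by fun_prop)).measurableSet
    filter_upwards [ae_restrict_mem hm] with y hy
    have hy : ε ≤ dist x y := hy
    have hd : 0 < dist x y := hε.trans_le hy
    rw [Real.norm_of_nonneg (by positivity), ← dist_eq_norm, Real.rpow_neg (by positivity),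
      ← div_eq_mul_inv, div_le_div_iff₀ (by positivity) (by positivity), one_mul,
      ← Real.mul_rpow (by positivity) (by positivity)]
    apply Real.rpow_le_rpow (by positivity) _ hs.le
    have : 1 ≤ dist x y / ε := (one_le_div hε).2 hy
    calc 1 + dist x y ≤ dist x y / ε + dist x y := by linarith
      _ = _ := by ring


lemma vol_ball_small [NeZero n] (z : EuclideanSpace ℝ (Fin n)) :
    Tendsto (fun ε : ℝ => volume.real (Metric.ball z ε)) (nhdsWithin 0 (Ioi 0)) (nhds 0) := by
  have h1 : ∀ ε ∈ Ioi (0:ℝ), volume.real (Metric.ball z ε) =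
      ε ^ n * volume.real (Metric.ball (0 : EuclideanSpace ℝ (Fin n)) 1) := by
    intro ε hε
    have hε : 0 < ε := hε
    rw [Measure.real, Measure.addHaar_ball _ _ hε.le, ENNReal.toReal_mul,
      ENNReal.toReal_ofReal (by positivity), finrank_euclideanSpace_fin]; rfl
  have h2 : Tendsto (fun ε : ℝ =>
      ε ^ n * volume.real (Metric.ball (0 : EuclideanSpace ℝ (Fin n)) 1)) (nhds 0) (nhds 0) := by
    have : Continuous (fun ε : ℝ =>
      ε ^ n * volume.real (Metric.ball (0 : EuclideanSpace ℝ (Fin n)) 1)) := by fun_prop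
    have h := this.tendsto 0
    simpa [NeZero.ne n] using h
  refine (h2.mono_left nhdsWithin_le_nhds).congr' ?_
  filter_upwards [self_mem_nhdsWithin] with ε hε
  exact (h1 ε hε).symm

/-- the key antisymmetric estimate -/
lemma key_est [NeZero n] {α C M : ℝ} (hα : 0 < α) (hC : 0 < C)
    {u F : EuclideanSpace ℝ (Fin n) → ℝ} (hu : Continuous u) (hM : ∀ x, |u x| ≤ M)
    (hF : IsFracLap n α C u F) {e : EuclideanSpace ℝ (Fin n)} (he : ‖e‖ = 1) (l : ℝ)
    (w : EuclideanSpace ℝ (Fin n) → ℝ) (hw : ∀ y, w y = u (hrefl e l y) - u y)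
    (x : EuclideanSpace ℝ (Fin n)) (hx : inner ℝ e x < l)
    (hβ : ∀ y, (w x - w y) / dist x y ^ ((n : ℝ) + α)
      + (w x + w y) / dist x (hrefl e l y) ^ ((n : ℝ) + α) ≤ 0)
    (z : EuclideanSpace ℝ (Fin n)) (ρ η ρ' : ℝ) (hρ' : 0 < ρ')
    (hβ' : ∀ y ∈ Metric.ball z ρ, (w x - w y) / dist x y ^ ((n : ℝ) + α)
      + (w x + w y) / dist x (hrefl e l y) ^ ((n : ℝ) + α) ≤ -η)
    (hz : ∀ y ∈ Metric.ball z ρ, ρ' ≤ dist x y ∧ ρ' ≤ dist x (hrefl e l y)) :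
    2 * (F (hrefl e l x) - F x) ≤ C * (-η * volume.real (Metric.ball z ρ)) := by
  set s := (n : ℝ) + α with hs
  have hs0 : 0 < s := by positivity
  set R := hrefl e l with hR
  set g : EuclideanSpace ℝ (Fin n) → ℝ := fun y => (w x - w y) / dist x y ^ s with hg
  have hwc : Continuous w := by
    have : w = fun y => u (hrefl e l y) - u y := funext hw
    rw [this]
    exact (hu.comp (continuous_hrefl e l)).sub hu
  have hwM : ∀ y, |w y| ≤ 2 * M := by
    intro y; rw [hw]
    have h1 := abs_le.1 (hM (hrefl e l y)); have h2 := abs_le.1 (hM y)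
    exact abs_le.2 ⟨by linarith, by linarith⟩
  have hM0 : 0 ≤ M := (abs_nonneg _).trans (hM 0)
  have hwR : ∀ y, w (R y) = - w y := by
    intro y; rw [hw, hw, hR, hrefl_hrefl he]; ring
  have hgR : ∀ y, g (R y) = (w x + w y) / dist x (R y) ^ s := by
    intro y; simp only [hg, hwR]; ring
  have hmD : ∀ ε : ℝ, MeasurableSet {y : EuclideanSpace ℝ (Fin n) | ε ≤ dist x y} := fun ε =>
      (isClosed_le continuous_const (by fun_prop)).measurableSet
  have hmD' : ∀ ε : ℝ, MeasurableSet {y : EuclideanSpace ℝ (Fin n) | ε ≤ dist x (R y)} := fun ε =>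
      (isClosed_le continuous_const
        (continuous_const.dist (continuous_hrefl e l))).measurableSet
  -- integrability
  have hint : ∀ (f : EuclideanSpace ℝ (Fin n) → ℝ) (K : ℝ), Continuous f → (∀ y, |f y| ≤ K) →
      ∀ ε > 0, IntegrableOn (fun y => f y / dist x y ^ s) {y | ε ≤ dist x y} := by
    intro f K hf hK ε hε
    have h := (kernel_int hα x hε).bdd_mul (f := f) (c := K) hf.aestronglyMeasurable
      (Eventually.of_forall hK)
    refine h.congr (Eventually.of_forall fun y => ?_)
    simp only [mul_one_div, hs]
  have hgint : ∀ ε > 0, IntegrableOn g {y | ε ≤ dist x y} := by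
    intro ε hε
    refine hint (fun y => w x - w y) (4 * M) (by fun_prop) (fun y => ?_) ε hε
    have h1 := abs_le.1 (hwM x); have h2 := abs_le.1 (hwM y)
    exact abs_le.2 ⟨by linarith, by linarith⟩
  -- the difference of the two principal values
  have hlim : Tendsto (fun ε : ℝ => C * ∫ y in {y | ε ≤ dist x y}, g y)
      (nhdsWithin 0 (Ioi 0)) (nhds (F (R x) - F x)) := by
    refine ((hF (R x)).sub (hF x)).congr' ?_
    filter_upwards [self_mem_nhdsWithin] with ε hε
    have hε : 0 < ε := hε
    rw [← setInt_hrefl he l, ← mul_sub]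
    have hpre : hrefl e l ⁻¹' {y | ε ≤ dist (R x) y} = {y | ε ≤ dist x y} := by
      ext y; simp only [mem_preimage, mem_ofPred_eq, hR, dist_hrefl_hrefl he]
    rw [hpre]
    simp only [hR, dist_hrefl_hrefl he]
    rw [← integral_sub]
    · congr 1
      apply integral_congr_ae
      refine Eventually.of_forall fun y => ?_
      simp only [hg, hw]; ring
    · refine hint (fun y => u (hrefl e l x) - u (hrefl e l y)) (2 * M)
        (continuous_const.sub (hu.comp (continuous_hrefl e l))) (fun y => ?_) ε hε
      have h1 := abs_le.1 (hM (hrefl e l x)); have h2 := abs_le.1 (hM (hrefl e l y))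
      exact abs_le.2 ⟨by linarith, by linarith⟩
    · refine hint (fun y => u x - u y) (2 * M)
        (continuous_const.sub hu) (fun y => ?_) ε hε
      have h1 := abs_le.1 (hM x); have h2 := abs_le.1 (hM y)
      exact abs_le.2 ⟨by linarith, by linarith⟩
  -- main inequality for small ε
  set d := l - inner ℝ e x with hd
  have hd0 : 0 < d := by linarith
  have hmain : ∀ᶠ ε : ℝ in nhdsWithin 0 (Ioi 0),
      2 * (C * ∫ y in {y | ε ≤ dist x y}, g y) ≤ C * (-η * volume.real (Metric.ball z ρ))
        + 2 * (C * (4 * M / d ^ s * volume.real (Metric.ball (R x) ε))) := by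
    have h1 : ∀ᶠ ε : ℝ in nhdsWithin 0 (Ioi 0), ε < min d ρ' :=
      (eventually_lt_nhds (lt_min hd0 hρ')).filter_mono nhdsWithin_le_nhds
    filter_upwards [self_mem_nhdsWithin, h1] with ε hε hε1
    have hε : 0 < ε := hε
    have hεd := hε1.trans_le (min_le_left _ _)
    have hερ := hε1.trans_le (min_le_right _ _)
    set D := {y : EuclideanSpace ℝ (Fin n) | ε ≤ dist x y} with hD
    set D' := {y : EuclideanSpace ℝ (Fin n) | ε ≤ dist x (R y)} with hD'
    have hsplit : ∫ y in D, g y = (∫ y in D ∩ D', g y) + ∫ y in D \ D', g y :=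
      (integral_inter_add_sdiff (hmD' ε) (hgint ε hε)).symm
    have hsub : D \ D' ⊆ Metric.ball (R x) ε := by
      rintro y ⟨_, hy⟩
      have hy : ¬ ε ≤ dist x (R y) := hy
      rw [Metric.mem_ball, dist_comm, hR, dist_hrefl_comm he]; exact not_le.1 hy
    have hvolfin : volume (Metric.ball (R x) ε) < ⊤ := measure_ball_lt_top
    have hsmall : ∫ y in D \ D', g y ≤ 4 * M / d ^ s * volume.real (Metric.ball (R x) ε) := by
      have h2 : ‖∫ y in D \ D', g y‖ ≤ 4 * M / d ^ s * volume.real (D \ D') := by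
        apply norm_setIntegral_le_of_norm_le_const
        · exact (measure_mono hsub).trans_lt hvolfin
        · intro y hy
          have hyb := hsub hy
          rw [Metric.mem_ball] at hyb
          have h3 : dist x (R x) = 2 * d := dist_self_hrefl he l x hx.le
          have h4 := dist_triangle x y (R x)
          have h5 : d ≤ dist x y := by linarith
          simp only [hg]
          rw [norm_div, Real.norm_of_nonneg (Real.rpow_nonneg dist_nonneg _)]
          apply div_le_div₀ (by positivity) _ (by positivity)
            (Real.rpow_le_rpow hd0.le h5 hs0.le)
          have h1 := abs_le.1 (hwM x); have h2 := abs_le.1 (hwM y)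
          exact abs_le.2 ⟨by linarith, by linarith⟩
      calc _ ≤ ‖∫ y in D \ D', g y‖ := Real.le_norm_self _
        _ ≤ _ := h2
        _ ≤ _ := by
          apply mul_le_mul_of_nonneg_left _ (by positivity)
          exact measureReal_mono hsub hvolfin.ne
    have hpre : hrefl e l ⁻¹' (D ∩ D') = D ∩ D' := by
      ext y
      simp only [mem_preimage, mem_inter_iff, hD, hD', mem_ofPred_eq, hR, hrefl_hrefl he]
      exact and_comm
    have hsym : ∫ y in D ∩ D', g (R y) = ∫ y in D ∩ D', g y := by
      have := setInt_hrefl he l g (D ∩ D')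
      rwa [hpre] at this
    have hgi : IntegrableOn g (D ∩ D') := (hgint ε hε).mono_set inter_subset_left
    have hgRi : IntegrableOn (fun y => g (R y)) (D ∩ D') := by
      have := ((mp_hrefl he l).integrableOn_comp_preimage (me_hrefl he l) (f := g)
        (s := D ∩ D')).2 hgi
      rwa [hpre] at this
    have hsum : 2 * ∫ y in D ∩ D', g y = ∫ y in D ∩ D', (g y + g (R y)) := by
      rw [integral_add hgi hgRi, hsym]; ring
    have hbs : Metric.ball z ρ ⊆ D ∩ D' := fun y hy =>
      ⟨hερ.le.trans (hz y hy).1, hερ.le.trans (hz y hy).2⟩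
    have hle : ∫ y in D ∩ D', (g y + g (R y)) ≤ -η * volume.real (Metric.ball z ρ) := by
      have hsi : IntegrableOn (fun y => g y + g (R y)) (D ∩ D') := hgi.add hgRi
      have hb : MeasurableSet (Metric.ball z ρ) := Metric.isOpen_ball.measurableSet
      rw [← integral_inter_add_sdiff hb hsi, inter_eq_right.2 hbs]
      have h1 : ∫ y in (D ∩ D') \ Metric.ball z ρ, (g y + g (R y)) ≤ 0 := by
        apply integral_nonpos
        intro y; simp only [hgR]; exact hβ y
      have h2 : ∫ y in Metric.ball z ρ, (g y + g (R y)) ≤ ∫ y in Metric.ball z ρ, (-η) := by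
        apply setIntegral_mono_on (hsi.mono_set hbs) _ hb
        · intro y hy; simp only [hgR]; exact hβ' y hy
        · exact integrableOn_const measure_ball_lt_top.ne
      rw [setIntegral_const, smul_eq_mul, mul_comm] at h2
      linarith
    rw [hsplit]
    have h3 : 2 * ((∫ y in D ∩ D', g y) + ∫ y in D \ D', g y) ≤
      -η * volume.real (Metric.ball z ρ)
        + 2 * (4 * M / d ^ s * volume.real (Metric.ball (R x) ε)) := by linarith
    have := mul_le_mul_of_nonneg_left h3 hC.le
    linarith
  have hr : Tendsto (fun ε : ℝ => C * (-η * volume.real (Metric.ball z ρ))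
        + 2 * (C * (4 * M / d ^ s * volume.real (Metric.ball (R x) ε))))
        (nhdsWithin 0 (Ioi 0)) (nhds (C * (-η * volume.real (Metric.ball z ρ))
        + 2 * (C * (4 * M / d ^ s * 0)))) :=
    ((((vol_ball_small (R x)).const_mul _).const_mul _).const_mul _).const_add _
  have := le_of_tendsto_of_tendsto (hlim.const_mul 2) hr hmain
  simpa using this


lemma inner_sub_le_dist {e : EuclideanSpace ℝ (Fin n)} (he : ‖e‖ = 1) (x y) :
    |inner ℝ e x - inner ℝ e y| ≤ dist x y := by
  rw [← inner_sub_right, dist_eq_norm]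
  have := abs_real_inner_le_norm e (x - y)
  rwa [he, one_mul] at this

lemma bracket_le {e : EuclideanSpace ℝ (Fin n)} (he : ‖e‖ = 1) (l s : ℝ) (hs : 0 < s)
    (w : EuclideanSpace ℝ (Fin n) → ℝ) 
    (x : EuclideanSpace ℝ (Fin n)) (hx : inner ℝ e x < l)
    (hmin : ∀ y, inner ℝ e y ≤ l → w x ≤ w y) (y) (hy : inner ℝ e y ≤ l) :
    (w x - w y) / dist x y ^ s + (w x + w y) / dist x (hrefl e l y) ^ s
      ≤ 2 * w x / dist x (hrefl e l y) ^ s := by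
  have h1 : (w x - w y) / dist x y ^ s ≤ (w x - w y) / dist x (hrefl e l y) ^ s := by
    rcases eq_or_ne x y with rfl | hne
    · simp
    · have hd : 0 < dist x y := dist_pos.2 hne
      have h2 : dist x y ≤ dist x (hrefl e l y) := by
        refine le_of_pow_le_pow_left₀ two_ne_zero dist_nonneg ?_
        rw [dist_sq_hrefl he]
        nlinarith [mul_nonneg (sub_nonneg.2 hx.le) (sub_nonneg.2 hy)]
      have h3 : dist x y ^ s ≤ dist x (hrefl e l y) ^ s := Real.rpow_le_rpow hd.le h2 hs.le
      have h4 : 0 < dist x y ^ s := by positivity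
      have h5 := hmin y hy
      have h6 : (w y - w x) / dist x (hrefl e l y) ^ s ≤ (w y - w x) / dist x y ^ s :=
        div_le_div_of_nonneg_left (by linarith) h4 h3
      have e1 : (w x - w y) / dist x y ^ s = -((w y - w x) / dist x y ^ s) := by ring
      have e2 : (w x - w y) / dist x (hrefl e l y) ^ s
        = -((w y - w x) / dist x (hrefl e l y) ^ s) := by ring
      rw [e1, e2]; linarith
  calc _ ≤ (w x - w y) / dist x (hrefl e l y) ^ s + (w x + w y) / dist x (hrefl e l y) ^ s := by
        linarith
    _ = _ := by ring

lemma bracket_le' {e : EuclideanSpace ℝ (Fin n)} (he : ‖e‖ = 1) (l s : ℝ) (hs : 0 < s)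
    (w : EuclideanSpace ℝ (Fin n) → ℝ) (hwR : ∀ y, w (hrefl e l y) = - w y)
    (x : EuclideanSpace ℝ (Fin n)) (hx : inner ℝ e x < l)
    (hmin : ∀ y, inner ℝ e y ≤ l → w x ≤ w y) (y) (hy : l ≤ inner ℝ e y) :
    (w x - w y) / dist x y ^ s + (w x + w y) / dist x (hrefl e l y) ^ s
      ≤ 2 * w x / dist x y ^ s := by
  have := bracket_le he l s hs w x hx hmin (hrefl e l y) (by rw [hrefl_inner he]; linarith)
  rw [hrefl_hrefl he, hwR] at this
  calc _ = (w x - -w y) / dist x (hrefl e l y) ^ s + (w x + -w y) / dist x y ^ s := by ring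
    _ ≤ _ := this

lemma bracket_nonpos {e : EuclideanSpace ℝ (Fin n)} (he : ‖e‖ = 1) (l s : ℝ) (hs : 0 < s)
    (w : EuclideanSpace ℝ (Fin n) → ℝ) (hwR : ∀ y, w (hrefl e l y) = - w y)
    (x : EuclideanSpace ℝ (Fin n)) (hx : inner ℝ e x < l) (hwx : w x ≤ 0)
    (hmin : ∀ y, inner ℝ e y ≤ l → w x ≤ w y) (y) :
    (w x - w y) / dist x y ^ s + (w x + w y) / dist x (hrefl e l y) ^ s ≤ 0 := by
  rcases le_total (inner ℝ e y) l with h | h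
  · exact (bracket_le he l s hs w x hx hmin y h).trans
      (div_nonpos_of_nonpos_of_nonneg (by linarith) (Real.rpow_nonneg dist_nonneg _))
  · exact (bracket_le' he l s hs w hwR x hx hmin y h).trans
      (div_nonpos_of_nonpos_of_nonneg (by linarith) (Real.rpow_nonneg dist_nonneg _))

def cst (n : ℕ) (α C : ℝ) : ℝ :=
  C * volume.real (Metric.ball (0 : EuclideanSpace ℝ (Fin n)) 1) / 5 ^ ((n : ℝ) + α)

lemma cst_pos {α C : ℝ} (hC : 0 < C) : 0 < cst n α C := by
  have : 0 < volume.real (Metric.ball (0 : EuclideanSpace ℝ (Fin n)) 1) :=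
    ENNReal.toReal_pos (Metric.measure_ball_pos _ _ one_pos).ne' measure_ball_lt_top.ne
  unfold cst; positivity

lemma neg_min_est [NeZero n] {α C M : ℝ} (hα : 0 < α) (hC : 0 < C)
    {u F : EuclideanSpace ℝ (Fin n) → ℝ} (hu : Continuous u) (hM : ∀ x, |u x| ≤ M)
    (hF : IsFracLap n α C u F) {e : EuclideanSpace ℝ (Fin n)} (he : ‖e‖ = 1) (l : ℝ)
    (w : EuclideanSpace ℝ (Fin n) → ℝ) (hw : ∀ y, w y = u (hrefl e l y) - u y)
    (x : EuclideanSpace ℝ (Fin n)) (hx : inner ℝ e x < l) (hwx : w x ≤ 0)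
    (hmin : ∀ y, inner ℝ e y ≤ l → w x ≤ w y) :
    cst n α C * (-w x) ≤ (F x - F (hrefl e l x)) * (l - inner ℝ e x) ^ α := by
  have hwR : ∀ y, w (hrefl e l y) = - w y := by
    intro y; rw [hw, hw, hrefl_hrefl he]; ring
  have hs0 : 0 < (n : ℝ) + α := by positivity
  set d := l - inner ℝ e x with hd
  have hd0 : 0 < d := by linarith
  set z := x + (4 * d) • e with hz
  have hze : inner ℝ e z = l + 3 * d := by
    rw [hz, inner_add_right, inner_smul_right, real_inner_self_eq_norm_sq, he]; linarith
  have hxz : dist x z = 4 * d := by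
    rw [hz, dist_self_add_right, norm_smul, he, mul_one, Real.norm_of_nonneg]; linarith
  have hball : ∀ y ∈ Metric.ball z d, l + 2 * d < inner ℝ e y ∧ inner ℝ e y < l + 4 * d := by
    intro y hy
    have h1 := (inner_sub_le_dist he y z).trans_lt hy
    rw [abs_lt, hze] at h1
    constructor <;> linarith
  have key := key_est hα hC hu hM hF he l w hw x hx
    (bracket_nonpos he l _ hs0 w hwR x hx hwx hmin) z d (-(2 * w x / (5 * d) ^ ((n : ℝ) + α))) d hd0
    (by
      intro y hy
      obtain ⟨h1, h2⟩ := hball y hy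
      refine (bracket_le' he l _ hs0 w hwR x hx hmin y (by linarith)).trans ?_
      rw [neg_neg]
      have h3 : dist x y ≤ 5 * d := by
        have := dist_triangle x z y
        have hy' : dist y z < d := hy
        rw [dist_comm] at hy'
        linarith
      have h4 : 0 < dist x y := by
        have := inner_sub_le_dist he x y
        rw [abs_le] at this
        linarith
      have h5 : (-(2 * w x)) / (5 * d) ^ ((n : ℝ) + α) ≤ (-(2 * w x)) / dist x y ^ ((n : ℝ) + α) :=
        div_le_div_of_nonneg_left (by linarith) (by positivity)
          (Real.rpow_le_rpow h4.le h3 hs0.le)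
      rw [neg_div, neg_div] at h5
      linarith)
    (by
      intro y hy
      obtain ⟨h1, h2⟩ := hball y hy
      have h3 := abs_le.1 (inner_sub_le_dist he x y)
      have h4 := abs_le.1 (inner_sub_le_dist he x (hrefl e l y))
      rw [hrefl_inner he] at h4
      constructor <;> linarith)
  have hvol : volume.real (Metric.ball z d) =
      d ^ n * volume.real (Metric.ball (0 : EuclideanSpace ℝ (Fin n)) 1) := by
    rw [Measure.real, Measure.addHaar_ball _ _ hd0.le, ENNReal.toReal_mul,
      ENNReal.toReal_ofReal (by positivity), finrank_euclideanSpace_fin]; rfl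
  rw [hvol, neg_neg, Real.mul_rpow (by norm_num) hd0.le, Real.rpow_add hd0, Real.rpow_natCast] at key
  have hda : 0 < d ^ α := by positivity
  have hdn : 0 < d ^ n := by positivity
  have h5 : (0:ℝ) < 5 ^ ((n : ℝ) + α) := by positivity
  have e1 : C * (2 * w x / (5 ^ ((n:ℝ) + α) * (d ^ n * d ^ α)) *
      (d ^ n * volume.real (Metric.ball (0 : EuclideanSpace ℝ (Fin n)) 1)))
      = 2 * (cst n α C * w x) / d ^ α := by
    unfold cst
    field_simp
  rw [e1, le_div_iff₀ hda] at key
  linarith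

lemma strong_max [NeZero n] {α C M : ℝ} (hα : 0 < α) (hC : 0 < C)
    {u F : EuclideanSpace ℝ (Fin n) → ℝ} (hu : Continuous u) (hM : ∀ x, |u x| ≤ M)
    (hF : IsFracLap n α C u F) {e : EuclideanSpace ℝ (Fin n)} (he : ‖e‖ = 1) (l : ℝ)
    (hmin : ∀ y, inner ℝ e y ≤ l → u y ≤ u (hrefl e l y))
    (x : EuclideanSpace ℝ (Fin n)) (hx : inner ℝ e x < l) (hwx : u (hrefl e l x) = u x)
    (hFx : F x ≤ F (hrefl e l x)) :
    ∀ y, inner ℝ e y < l → u (hrefl e l y) = u y := by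
  intro y₀ hy₀
  by_contra hne
  have hlt : u y₀ < u (hrefl e l y₀) := lt_of_le_of_ne (hmin y₀ hy₀.le) (Ne.symm hne)
  set w : EuclideanSpace ℝ (Fin n) → ℝ := fun y => u (hrefl e l y) - u y with hw
  have hwR : ∀ y, w (hrefl e l y) = - w y := by
    intro y; simp only [hw]; rw [hrefl_hrefl he]; ring
  have hwx0 : w x = 0 := by simp only [hw]; linarith
  have hw0 : 0 < w y₀ := by simp only [hw]; linarith
  have hwc : Continuous w := (hu.comp (continuous_hrefl e l)).sub hu
  have hs0 : 0 < (n : ℝ) + α := by positivity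
  have hxy : 0 < dist x y₀ := by
    apply dist_pos.2
    rintro rfl; linarith
  have hlt2 : dist x y₀ < dist x (hrefl e l y₀) := by
    apply lt_of_pow_lt_pow_left₀ 2 dist_nonneg
    rw [dist_sq_hrefl he]
    nlinarith [mul_pos (sub_pos.2 hx) (sub_pos.2 hy₀)]
  have hxR := hxy.trans hlt2
  set β : EuclideanSpace ℝ (Fin n) → ℝ := fun y => (w x - w y) / dist x y ^ ((n : ℝ) + α)
      + (w x + w y) / dist x (hrefl e l y) ^ ((n : ℝ) + α) with hβ
  have hβ0 : β y₀ < 0 := by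
    simp only [hβ, hwx0]
    have h1 : dist x y₀ ^ ((n : ℝ) + α) < dist x (hrefl e l y₀) ^ ((n : ℝ) + α) :=
      Real.rpow_lt_rpow hxy.le hlt2 hs0
    have h2 : w y₀ / dist x (hrefl e l y₀) ^ ((n : ℝ) + α) < w y₀ / dist x y₀ ^ ((n : ℝ) + α) :=
      div_lt_div_of_pos_left hw0 (by positivity) h1
    rw [zero_sub, zero_add, neg_div]; linarith
  have hRc := continuous_hrefl e l
  have hβc : ContinuousAt β y₀ := by
    apply ContinuousAt.add
    · apply ContinuousAt.div (by fun_prop) _ (by positivity)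
      exact ContinuousAt.rpow_const (by fun_prop) (Or.inl hxy.ne')
    · apply ContinuousAt.div (by fun_prop) _ (by positivity)
      exact ContinuousAt.rpow_const (by fun_prop) (Or.inl hxR.ne')
  have ev1 : ∀ᶠ y in nhds y₀, β y < β y₀ / 2 := hβc.eventually_lt_const (by linarith)
  have ev2 : ∀ᶠ y in nhds y₀, dist x y₀ / 2 < dist x y :=
    ContinuousAt.eventually_lt (f := fun _ => dist x y₀ / 2) (by fun_prop) (by fun_prop) (half_lt_self hxy)
  have ev3 : ∀ᶠ y in nhds y₀, dist x y₀ / 2 < dist x (hrefl e l y) :=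
    ContinuousAt.eventually_lt (f := fun _ => dist x y₀ / 2) (by fun_prop) (by fun_prop)
      ((half_lt_self hxy).trans hlt2)
  obtain ⟨ρ, hρ, hb⟩ := Metric.eventually_nhds_iff_ball.1 (ev1.and (ev2.and ev3))
  have key := key_est hα hC hu hM hF he l w (fun _ => rfl) x hx
    (bracket_nonpos he l _ hs0 w hwR x hx hwx0.le (fun y hy => by
      rw [hwx0]; exact sub_nonneg.2 (hmin y hy))) y₀ ρ (-(β y₀ / 2)) (dist x y₀ / 2) (by linarith)
    (fun y hy => by rw [neg_neg]; exact (hb y hy).1.le)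
    (fun y hy => ⟨(hb y hy).2.1.le, (hb y hy).2.2.le⟩)
  have hv : 0 < volume.real (Metric.ball y₀ ρ) :=
    ENNReal.toReal_pos (Metric.measure_ball_pos _ _ hρ).ne' measure_ball_lt_top.ne
  rw [neg_neg] at key
  have : C * (β y₀ / 2 * volume.real (Metric.ball y₀ ρ)) < 0 :=
    mul_neg_of_pos_of_neg hC (mul_neg_of_neg_of_pos (by linarith) hv)
  linarith


lemma bern {p u u' : ℝ} (hp : 1 ≤ p) (hu : 0 < u) (hu' : 0 < u') :
    p * u ^ (p - 1) * (u' - u) ≤ u' ^ p - u ^ p := by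
  have h := one_add_mul_self_le_rpow_one_add (s := (u' - u) / u)
    (by rw [le_div_iff₀ hu]; linarith) hp
  have e1 : 1 + (u' - u) / u = u' / u := by field_simp; ring
  rw [e1, Real.div_rpow hu'.le hu.le, le_div_iff₀ (by positivity)] at h
  rw [Real.rpow_sub_one hu.ne']
  have e2 : (1 + p * ((u' - u) / u)) * u ^ p = u ^ p + p * (u ^ p / u) * (u' - u) := by ring
  linarith

lemma alg_ineq {p q u v u' v' : ℝ} (hp : 1 ≤ p) (hq : 1 ≤ q) (hu : 0 < u) (hv : 0 < v)
    (hu' : 0 < u') (hv' : 0 < v') (h1 : u' ≤ u) (h2 : u' - u ≤ v' - v) :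
    (p * u ^ (p - 1) * v ^ q + q * u ^ p * v ^ (q - 1)) * (u' - u)
      ≤ u' ^ p * v' ^ q - u ^ p * v ^ q := by
  have b1 := bern hp hu hu'
  have b2 := bern hq hv hv'
  have p1 : 0 ≤ v ^ q := by positivity
  have p2 : 0 ≤ u ^ p := by positivity
  have p3 : 0 ≤ u' ^ p := by positivity
  have p4 : 0 ≤ v ^ (q - 1) := by positivity
  have m1 := mul_le_mul_of_nonneg_left b1 p1
  have m3 : 0 ≤ q * u ^ p * v ^ (q - 1) := by positivity
  rcases le_total v v' with h | h
  · have hv2 : v ^ q ≤ v' ^ q := Real.rpow_le_rpow hv.le h (by linarith)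
    have m2 := mul_le_mul_of_nonneg_left hv2 p3
    nlinarith [mul_nonneg m3 (sub_nonneg.2 h1)]
  · have hv2 : v' ^ q ≤ v ^ q := Real.rpow_le_rpow hv'.le h (by linarith)
    have hu2 : u' ^ p ≤ u ^ p := Real.rpow_le_rpow hu'.le h1 (by linarith)
    have m2 := mul_le_mul_of_nonneg_left b2 p2
    have m4 := mul_le_mul_of_nonneg_left h2 m3
    nlinarith [mul_nonneg (sub_nonneg.2 hu2) (sub_nonneg.2 hv2)]

def KK {N : ℕ} (p q : Fin (N + 1) → ℝ) (u v : EuclideanSpace ℝ (Fin n) → ℝ)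
    (x : EuclideanSpace ℝ (Fin n)) : ℝ :=
  ∑ i, (p i * u x ^ (p i - 1) * v x ^ q i + q i * u x ^ p i * v x ^ (q i - 1))

lemma KK_nonneg {N : ℕ} {p q : Fin (N + 1) → ℝ} (hp : ∀ i, 1 ≤ p i) (hq : ∀ i, 1 ≤ q i)
    {u v : EuclideanSpace ℝ (Fin n) → ℝ} (hu : ∀ x, 0 < u x) (hv : ∀ x, 0 < v x) (x) :
    0 ≤ KK p q u v x := by
  apply Finset.sum_nonneg
  intro i _
  have := hp i; have := hq i; have := hu x; have := hv x
  positivity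

lemma KK_cont {N : ℕ} {p q : Fin (N + 1) → ℝ} 
    {u v : EuclideanSpace ℝ (Fin n) → ℝ} (hu : ∀ x, 0 < u x) (hv : ∀ x, 0 < v x)
    (hcu : Continuous u) (hcv : Continuous v) : Continuous (KK p q u v) := by
  unfold KK
  have h1 : ∀ t : ℝ, Continuous (fun x => u x ^ t) := fun t =>
    hcu.rpow_const (fun x => Or.inl (hu x).ne')
  have h2 : ∀ t : ℝ, Continuous (fun x => v x ^ t) := fun t =>
    hcv.rpow_const (fun x => Or.inl (hv x).ne')
  fun_prop

lemma bad_half [NeZero n] {N : ℕ} {α C M : ℝ} (hα : 0 < α) (hC : 0 < C)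
    {p q : Fin (N + 1) → ℝ} (hp : ∀ i, 1 ≤ p i) (hq : ∀ i, 1 ≤ q i)
    {u v : EuclideanSpace ℝ (Fin n) → ℝ} (hu : ∀ x, 0 < u x) (hv : ∀ x, 0 < v x)
    (hcu : Continuous u) (hM : ∀ x, |u x| ≤ M)
    (hF : IsFracLap n α C u (fun x => ∑ i, u x ^ p i * v x ^ q i))
    {e : EuclideanSpace ℝ (Fin n)} (he : ‖e‖ = 1) (l : ℝ)
    (x : EuclideanSpace ℝ (Fin n)) (hx : inner ℝ e x < l)
    (hneg : u (hrefl e l x) - u x < 0)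
    (hle : u (hrefl e l x) - u x ≤ v (hrefl e l x) - v x)
    (hmin : ∀ y, inner ℝ e y ≤ l → u (hrefl e l x) - u x ≤ u (hrefl e l y) - u y) :
    cst n α C ≤ KK p q u v x * (l - inner ℝ e x) ^ α := by
  have h1 := neg_min_est hα hC hcu hM hF he l (fun y => u (hrefl e l y) - u y) (fun _ => rfl) x hx
    hneg.le hmin
  have h2 : KK p q u v x * (u (hrefl e l x) - u x) ≤
      (∑ i, u (hrefl e l x) ^ p i * v (hrefl e l x) ^ q i) - ∑ i, u x ^ p i * v x ^ q i := by
    rw [KK, Finset.sum_mul, ← Finset.sum_sub_distrib]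
    apply Finset.sum_le_sum
    intro i _
    exact alg_ineq (hp i) (hq i) (hu _) (hv _) (hu _) (hv _) (by linarith) hle
  have hd : 0 < (l - inner ℝ e x) ^ α := Real.rpow_pos_of_pos (by linarith) _
  have h3 := mul_le_mul_of_nonneg_right h2 hd.le
  have hpos : 0 < -(u (hrefl e l x) - u x) := by linarith
  refine le_of_mul_le_mul_right ?_ hpos
  linarith

lemma tendsto_cocompact_zero {u : EuclideanSpace ℝ (Fin n) → ℝ} {a : ℝ} (ha : 0 < a)
    (hu : ∀ x, 0 < u x) (hdecu : ∃ R : ℝ, ∀ x, R < ‖x‖ → u x ≤ ‖x‖ ^ (-a)) :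
    Tendsto u (cocompact _) (nhds 0) := by
  obtain ⟨R, hR⟩ := hdecu
  have hn := tendsto_norm_cocompact_atTop (E := EuclideanSpace ℝ (Fin n))
  have h := (tendsto_rpow_neg_atTop ha).comp hn
  refine tendsto_of_tendsto_of_tendsto_of_le_of_le' tendsto_const_nhds h
    (Eventually.of_forall fun x => (hu x).le) ?_
  filter_upwards [hn.eventually_gt_atTop R] with x hx using hR x hx

lemma term_dec {u v : EuclideanSpace ℝ (Fin n) → ℝ} {a b α P Q : ℝ} 
    (hu : ∀ x, 0 < u x) (hv : ∀ x, 0 < v x)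
    (hdecu : ∃ R : ℝ, ∀ x, R < ‖x‖ → u x ≤ ‖x‖ ^ (-a))
    (hdecv : ∃ R : ℝ, ∀ x, R < ‖x‖ → v x ≤ ‖x‖ ^ (-b))
    (hP : 0 ≤ P) (hQ : 0 ≤ Q) (h : α < a * P + b * Q) :
    Tendsto (fun x => u x ^ P * v x ^ Q * ‖x‖ ^ α) (cocompact _) (nhds 0) := by
  obtain ⟨R, hR⟩ := hdecu
  obtain ⟨R', hR'⟩ := hdecv
  have hn := tendsto_norm_cocompact_atTop (E := EuclideanSpace ℝ (Fin n))
  have ht := (tendsto_rpow_neg_atTop (y := a * P + b * Q - α) (by linarith)).comp hn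
  refine tendsto_of_tendsto_of_tendsto_of_le_of_le' tendsto_const_nhds ht
    (Eventually.of_forall fun x => ?_) ?_
  · have := hu x; have := hv x; positivity
  filter_upwards [hn.eventually_gt_atTop R, hn.eventually_gt_atTop R',
    hn.eventually_gt_atTop 0] with x hx hx' hx0
  simp only [Function.comp]
  have e : ‖x‖ ^ (-(a * P + b * Q - α)) = (‖x‖ ^ (-a)) ^ P * (‖x‖ ^ (-b)) ^ Q * ‖x‖ ^ α := by
    rw [← Real.rpow_mul hx0.le, ← Real.rpow_mul hx0.le, ← Real.rpow_add hx0, ← Real.rpow_add hx0]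
    congr 1; ring
  rw [e]
  have := (hu x).le
  have := (hv x).le
  gcongr
  · exact hR x hx
  · exact hR' x hx'

lemma KK_dec {N : ℕ} {p q : Fin (N + 1) → ℝ} (hp : ∀ i, 1 ≤ p i) (hq : ∀ i, 1 ≤ q i)
    {u v : EuclideanSpace ℝ (Fin n) → ℝ} {a b α : ℝ} (ha : 0 < a) (hb : 0 < b)
    (hu : ∀ x, 0 < u x) (hv : ∀ x, 0 < v x)
    (hdecu : ∃ R : ℝ, ∀ x, R < ‖x‖ → u x ≤ ‖x‖ ^ (-a))
    (hdecv : ∃ R : ℝ, ∀ x, R < ‖x‖ → v x ≤ ‖x‖ ^ (-b))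
    (h1 : α < a * (Finset.univ.inf' Finset.univ_nonempty p)
              + b * (Finset.univ.inf' Finset.univ_nonempty q) - a)
    (h2 : α < a * (Finset.univ.inf' Finset.univ_nonempty p)
              + b * (Finset.univ.inf' Finset.univ_nonempty q) - b) :
    Tendsto (fun x => KK p q u v x * ‖x‖ ^ α) (cocompact _) (nhds 0) := by
  have hf : (fun x => KK p q u v x * ‖x‖ ^ α) = fun x => ∑ i,
      (p i * (u x ^ (p i - 1) * v x ^ q i * ‖x‖ ^ α)
        + q i * (u x ^ p i * v x ^ (q i - 1) * ‖x‖ ^ α)) := by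
    funext x
    rw [KK, Finset.sum_mul]
    apply Finset.sum_congr rfl
    intro i _; ring
  rw [hf]
  have hz : (0:ℝ) = ∑ i : Fin (N + 1), (p i * 0 + q i * 0) := by simp
  rw [hz]
  apply tendsto_finsetSum
  intro i _
  have ip : Finset.univ.inf' Finset.univ_nonempty p ≤ p i := Finset.inf'_le _ (Finset.mem_univ i)
  have iq : Finset.univ.inf' Finset.univ_nonempty q ≤ q i := Finset.inf'_le _ (Finset.mem_univ i)
  have j1 := mul_le_mul_of_nonneg_left ip ha.le
  have j2 := mul_le_mul_of_nonneg_left iq hb.le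
  have := hp i
  have := hq i
  refine ((term_dec hu hv hdecu hdecv ?_ ?_ ?_).const_mul _).add
    ((term_dec hu hv hdecu hdecv ?_ ?_ ?_).const_mul _) <;> linarith

lemma bdd_of {u : EuclideanSpace ℝ (Fin n) → ℝ} (hc : Continuous u)
    (h : Tendsto u (cocompact _) (nhds 0)) : ∃ M, ∀ x, |u x| ≤ M := by
  have h1 : ∀ᶠ x in cocompact _, |u x| ≤ |u 0| + 1 := by
    have h2 := h.abs
    rw [abs_zero] at h2
    filter_upwards [h2.eventually_lt_const (by positivity : 0 < |u 0| + 1)] with x hx using hx.le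
  obtain ⟨K, hK, hKs⟩ := mem_cocompact.1 h1
  obtain ⟨M, hM⟩ := hK.exists_bound_of_continuousOn hc.continuousOn
  refine ⟨max M (|u 0| + 1), fun x => ?_⟩
  by_cases hx : x ∈ K
  · exact (hM x hx).trans (le_max_left _ _)
  · exact (hKs hx : |u x| ≤ |u 0| + 1).trans (le_max_right _ _)


/-- abstract moving planes argument in a fixed direction -/
lemma moving_planes {α c : ℝ} (hα : 0 < α) (hc : 0 < c)
    {u v K : EuclideanSpace ℝ (Fin n) → ℝ} (hu : ∀ x, 0 < u x)
    (hcu : Continuous u) (hcv : Continuous v) (hu0 : Tendsto u (cocompact _) (nhds 0))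
    (hK : Continuous K) (hK0 : ∀ x, 0 ≤ K x)
    (hKd : Tendsto (fun x => K x * ‖x‖ ^ α) (cocompact _) (nhds 0))
    {e : EuclideanSpace ℝ (Fin n)} (he : ‖e‖ = 1)
    (hbad : ∀ l, (∃ x, inner ℝ e x < l ∧
        min (u (hrefl e l x) - u x) (v (hrefl e l x) - v x) < 0) →
      ∃ x, inner ℝ e x < l ∧ min (u (hrefl e l x) - u x) (v (hrefl e l x) - v x) < 0 ∧
        c ≤ K x * (l - inner ℝ e x) ^ α)
    (hstrong : ∀ l, (∀ y, inner ℝ e y < l → u y ≤ u (hrefl e l y) ∧ v y ≤ v (hrefl e l y)) →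
      (∃ x, inner ℝ e x < l ∧ (u (hrefl e l x) = u x ∨ v (hrefl e l x) = v x)) →
      ∀ y, inner ℝ e y < l → u (hrefl e l y) = u y ∧ v (hrefl e l y) = v y) :
    ∃ l, ∀ x, u (hrefl e l x) = u x ∧ v (hrefl e l x) = v x := by
  have hin : ∀ x, |inner ℝ e x| ≤ ‖x‖ := fun x => by
    simpa [he] using abs_real_inner_le_norm e x
  have hbound : ∀ Λ : ℝ, ∃ R₀ : ℝ, ∀ l ≤ Λ, ∀ x, inner ℝ e x < l →
      c ≤ K x * (l - inner ℝ e x) ^ α → ‖x‖ ≤ R₀ := by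
    intro Λ
    have h1 : ∀ᶠ x in cocompact (EuclideanSpace ℝ (Fin n)), K x * ‖x‖ ^ α < c / 2 ^ α :=
      hKd.eventually_lt_const (by positivity)
    obtain ⟨T, hT, hTs⟩ := mem_cocompact.1 h1
    obtain ⟨R₁, hR₁⟩ := hT.isBounded.exists_norm_le
    refine ⟨max R₁ |Λ|, fun l hl x hx hcx => ?_⟩
    by_contra hlt
    rw [not_le, max_lt_iff] at hlt
    have hx1 : x ∉ T := fun h => absurd (hR₁ x h) (not_le.2 hlt.1)
    have h2 : K x * ‖x‖ ^ α < c / 2 ^ α := hTs hx1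
    have h3 : l - inner ℝ e x ≤ 2 * ‖x‖ := by
      have := abs_le.1 (hin x)
      have := le_abs_self Λ
      linarith
    have h4 : (l - inner ℝ e x) ^ α ≤ 2 ^ α * ‖x‖ ^ α := by
      rw [← Real.mul_rpow (by norm_num) (norm_nonneg _)]
      exact Real.rpow_le_rpow (by linarith) h3 hα.le
    have h5 := mul_le_mul_of_nonneg_left h4 (hK0 x)
    rw [lt_div_iff₀ (by positivity)] at h2
    linarith
  set Good : ℝ → Prop := fun l => ∀ y, inner ℝ e y < l →
    u y ≤ u (hrefl e l y) ∧ v y ≤ v (hrefl e l y) with hGood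
  have hnot : ∀ l, ¬ Good l → ∃ x, inner ℝ e x < l ∧
      min (u (hrefl e l x) - u x) (v (hrefl e l x) - v x) < 0 ∧
        c ≤ K x * (l - inner ℝ e x) ^ α := by
    intro l hl
    apply hbad
    simp only [hGood, not_forall] at hl
    obtain ⟨x, hx, hx2⟩ := hl
    refine ⟨x, hx, ?_⟩
    rw [not_and_or, not_le, not_le] at hx2
    rw [min_lt_iff]
    rcases hx2 with h | h
    · left; linarith
    · right; linarith
  set S : Set ℝ := {l | ∀ μ ≤ l, Good μ} with hS
  have hSne : S.Nonempty := by
    obtain ⟨R₀, hR₀⟩ := hbound 0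
    refine ⟨min 0 (-R₀ - 1), fun μ hμ => ?_⟩
    by_contra hb
    obtain ⟨x, hx, -, hx2⟩ := hnot μ hb
    have h1 := hR₀ μ (hμ.trans (min_le_left _ _)) x hx hx2
    have h2 := hμ.trans (min_le_right _ _)
    have := abs_le.1 (hin x)
    linarith
  have hline : Tendsto (fun t : ℝ => t • e) atTop (cocompact _) := by
    rw [← Metric.cobounded_eq_cocompact, ← tendsto_norm_atTop_iff_cobounded]
    simpa [norm_smul, he] using tendsto_abs_atTop_atTop
  have hSb : BddAbove S := by
    by_contra hnb
    rw [not_bddAbove_iff] at hnb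
    have hall : ∀ l, Good l := fun l => by
      obtain ⟨m, hm, hlm⟩ := hnb l
      exact hm l hlm.le
    have h1 : Tendsto (fun t : ℝ => u ((2 * t) • e)) atTop (nhds 0) :=
      (hu0.comp hline).comp (tendsto_id.const_mul_atTop two_pos)
    have h2 : ∀ᶠ t : ℝ in atTop, u 0 ≤ u ((2 * t) • e) := by
      filter_upwards [eventually_gt_atTop 0] with t ht
      have := (hall t 0 (by simpa using ht)).1
      simpa [hrefl] using this
    have := ge_of_tendsto h1 h2
    exact absurd (hu 0) (not_lt.2 this)
  set l₀ := sSup S with hl₀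
  have hlt : ∀ μ < l₀, Good μ := fun μ hμ => by
    obtain ⟨m, hm, hlm⟩ := exists_lt_of_lt_csSup hSne hμ
    exact hm μ hlm.le
  have hcR : ∀ x, Continuous (fun μ : ℝ => hrefl e μ x) := fun x =>
    (continuous_hrefl2 e).comp (by fun_prop : Continuous fun μ : ℝ => (μ, x))
  have hgl : Good l₀ := by
    intro x hx
    have hev : ∀ᶠ μ in nhdsWithin l₀ (Iio l₀), inner ℝ e x < μ ∧ μ < l₀ := by
      filter_upwards [self_mem_nhdsWithin, (eventually_gt_nhds hx).filter_mono nhdsWithin_le_nhds]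
        with μ h1 h2 using ⟨h2, h1⟩
    constructor
    · refine ge_of_tendsto (((hcu.comp (hcR x)).tendsto l₀).mono_left (nhdsWithin_le_nhds (s := Iio l₀))) ?_
      filter_upwards [hev] with μ hμ using (hlt μ hμ.2 x hμ.1).1
    · refine ge_of_tendsto (((hcv.comp (hcR x)).tendsto l₀).mono_left (nhdsWithin_le_nhds (s := Iio l₀))) ?_
      filter_upwards [hev] with μ hμ using (hlt μ hμ.2 x hμ.1).2
  by_cases hex : ∃ x, inner ℝ e x < l₀ ∧ (u (hrefl e l₀ x) = u x ∨ v (hrefl e l₀ x) = v x)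
  · refine ⟨l₀, fun x => ?_⟩
    have hs := hstrong l₀ hgl hex
    rcases lt_trichotomy (inner ℝ e x) l₀ with h | h | h
    · exact hs x h
    · have : hrefl e l₀ x = x := by rw [hrefl, h]; simp
      rw [this]; exact ⟨rfl, rfl⟩
    · have h2 := hs (hrefl e l₀ x) (by rw [hrefl_inner he]; linarith)
      rw [hrefl_hrefl he] at h2
      exact ⟨h2.1.symm, h2.2.symm⟩
  · exfalso
    have hseq : ∀ k : ℕ, ∃ μ x, l₀ < μ ∧ μ ≤ l₀ + 1 / ((k : ℝ) + 1) ∧ inner ℝ e x < μ ∧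
        min (u (hrefl e μ x) - u x) (v (hrefl e μ x) - v x) < 0 ∧
        c ≤ K x * (μ - inner ℝ e x) ^ α := by
      intro k
      have h1 : l₀ + 1 / ((k : ℝ) + 1) ∉ S := fun h => by
        have := le_csSup hSb h
        have : (0:ℝ) < 1 / ((k : ℝ) + 1) := by positivity
        linarith
      have h2 : ∃ μ, μ ≤ l₀ + 1 / ((k : ℝ) + 1) ∧ ¬ Good μ := by
        by_contra hcon
        push Not at hcon
        exact h1 hcon
      obtain ⟨μ, hμ, hg⟩ := h2
      obtain ⟨x, hx⟩ := hnot μ hg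
      refine ⟨μ, x, ?_, hμ, hx⟩
      by_contra hle
      rcases (not_lt.1 hle).lt_or_eq with h | h
      · exact hg (hlt μ h)
      · rw [h] at hg; exact hg hgl
    choose μ X hμ1 hμ2 hX1 hX2 hX3 using hseq
    have hμ : Tendsto μ atTop (nhds l₀) := by
      refine tendsto_of_tendsto_of_tendsto_of_le_of_le tendsto_const_nhds
        (h := fun k : ℕ => l₀ + 1 / ((k : ℝ) + 1)) ?_ (fun k => (hμ1 k).le) hμ2
      simpa using (tendsto_one_div_add_atTop_nhds_zero_nat (𝕜 := ℝ)).const_add l₀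
    obtain ⟨R₀, hR₀⟩ := hbound (l₀ + 1)
    have hXb : ∀ k, X k ∈ Metric.closedBall (0 : EuclideanSpace ℝ (Fin n)) R₀ := by
      intro k
      rw [mem_closedBall_zero_iff]
      refine hR₀ (μ k) ((hμ2 k).trans ?_) _ (hX1 k) (hX3 k)
      have : 1 / ((k : ℝ) + 1) ≤ 1 := by
        rw [div_le_one (by positivity)]
        linarith [(Nat.cast_nonneg k : (0:ℝ) ≤ k)]
      linarith
    obtain ⟨y, -, φ, hφ, hy⟩ := (isCompact_closedBall _ _).tendsto_subseq hXb
    have hμφ : Tendsto (μ ∘ φ) atTop (nhds l₀) := hμ.comp hφ.tendsto_atTop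
    have hpair : Tendsto (fun k => ((μ ∘ φ) k, (X ∘ φ) k)) atTop (nhds (l₀, y)) :=
      hμφ.prodMk_nhds hy
    have hR2 := continuous_hrefl2 e
    have hcont1 : Continuous (fun z : ℝ × EuclideanSpace ℝ (Fin n) =>
        min (u (hrefl e z.1 z.2) - u z.2) (v (hrefl e z.1 z.2) - v z.2)) := by fun_prop
    have hcont2 : Continuous (fun z : ℝ × EuclideanSpace ℝ (Fin n) =>
        K z.2 * (z.1 - inner ℝ e z.2) ^ α) := by
      apply Continuous.mul (by fun_prop)
      exact Continuous.rpow_const (by fun_prop) (fun _ => Or.inr hα.le)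
    have hcont3 : Continuous (fun z : ℝ × EuclideanSpace ℝ (Fin n) =>
        z.1 - inner ℝ e z.2) := by fun_prop
    have l1 : min (u (hrefl e l₀ y) - u y) (v (hrefl e l₀ y) - v y) ≤ 0 :=
      le_of_tendsto ((hcont1.tendsto (l₀, y)).comp hpair)
        (Eventually.of_forall fun k => (hX2 (φ k)).le)
    have l2 : c ≤ K y * (l₀ - inner ℝ e y) ^ α :=
      ge_of_tendsto ((hcont2.tendsto (l₀, y)).comp hpair)
        (Eventually.of_forall fun k => hX3 (φ k))
    have l3 : 0 ≤ l₀ - inner ℝ e y :=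
      ge_of_tendsto ((hcont3.tendsto (l₀, y)).comp hpair)
        (Eventually.of_forall fun k => (sub_pos.2 (hX1 (φ k))).le)
    have l4 : 0 < l₀ - inner ℝ e y := by
      refine lt_of_le_of_ne l3 (fun h => ?_)
      rw [← h, Real.zero_rpow hα.ne', mul_zero] at l2
      linarith
    have hyl : inner ℝ e y < l₀ := by linarith
    have hg := hgl y hyl
    apply hex
    refine ⟨y, hyl, ?_⟩
    rcases min_le_iff.1 l1 with h | h
    · left; linarith
    · right; linarith

/-- reflection symmetry in all directions gives radial symmetry -/
lemma radial_of_refl 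
    {u v : EuclideanSpace ℝ (Fin n) → ℝ} (hu : ∀ x, 0 < u x)
    (hu0 : Tendsto u (cocompact _) (nhds 0))
    (H : ∀ e : EuclideanSpace ℝ (Fin n), ‖e‖ = 1 →
      ∃ l, ∀ x, u (hrefl e l x) = u x ∧ v (hrefl e l x) = v x) :
    ∃ x₀ : EuclideanSpace ℝ (Fin n), ∀ x y : EuclideanSpace ℝ (Fin n),
      ‖x - x₀‖ = ‖y - x₀‖ → u x = u y ∧ v x = v y := by
  have hb : ∀ i : Fin n, ∃ l, ∀ x, u (hrefl (EuclideanSpace.single i 1) l x) = u x ∧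
      v (hrefl (EuclideanSpace.single i 1) l x) = v x := fun i => H _ (by simp)
  choose L hL using hb
  set x₀ : EuclideanSpace ℝ (Fin n) := WithLp.toLp 2 L with hx₀
  have hflip : ∀ (s : Finset (Fin n)) (x : EuclideanSpace ℝ (Fin n)),
      u (WithLp.toLp 2 (fun i => if i ∈ s then 2 * L i - x i else x i)) = u x := by
    intro s x
    induction s using Finset.induction_on with
    | empty => simp
    | insert j s hj ih =>
      rw [← ih, ← (hL j (WithLp.toLp 2 (fun i => if i ∈ s then 2 * L i - x i else x i))).1]
      congr 1
      ext i
      simp only [hrefl]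
      by_cases hij : i = j
      · subst hij
        simp [hj, EuclideanSpace.inner_single_left]
        ring
      · simp [hij, EuclideanSpace.inner_single_left]
  have hpt : ∀ x, u ((2:ℝ) • x₀ - x) = u x := by
    intro x
    rw [← hflip Finset.univ x]
    congr 1
    ext i
    simp [hx₀]
  have hl : ∀ e : EuclideanSpace ℝ (Fin n), ‖e‖ = 1 → ∀ x,
      u (hrefl e (inner ℝ e x₀) x) = u x ∧ v (hrefl e (inner ℝ e x₀) x) = v x := by
    intro e he
    obtain ⟨l, hl⟩ := H e he
    suffices hh : inner ℝ e x₀ = l by rw [hh]; exact hl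
    by_contra hne
    set t := 4 * (inner ℝ e x₀ - l) with ht
    have ht0 : t ≠ 0 := by
      intro h; apply hne; linarith
    have hper : ∀ x, u (x + t • e) = u x := by
      intro x
      rw [← (hl x).1, ← hpt (hrefl e l x), ← (hl ((2:ℝ) • x₀ - hrefl e l x)).1, 
        ← hpt (hrefl e l ((2:ℝ) • x₀ - hrefl e l x))]
      congr 1
      have h1 : hrefl e l ((2:ℝ) • x₀ - hrefl e l x) = ((2:ℝ) • x₀ - hrefl e l x) +
          (2 * (l - (2 * inner ℝ e x₀ - (2 * l - inner ℝ e x)))) • e := by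
        conv_lhs => rw [hrefl, inner_sub_right, inner_smul_right, hrefl_inner he]
      rw [h1, hrefl, ht]
      module
    have hk : ∀ k : ℕ, u (((k : ℝ) * t) • e) = u 0 := by
      intro k
      induction k with
      | zero => simp
      | succ k ih =>
        rw [← ih, ← hper (((k : ℝ) * t) • e)]
        congr 1
        push_cast
        module
    have hline : Tendsto (fun k : ℕ => ((k : ℝ) * t) • e) atTop (cocompact _) := by
      rw [← Metric.cobounded_eq_cocompact, ← tendsto_norm_atTop_iff_cobounded]
      simp only [norm_smul, he, mul_one, norm_mul]
      apply Tendsto.atTop_mul_const (by positivity)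
      simpa using (tendsto_natCast_atTop_atTop (R := ℝ))
    have h2 := hu0.comp hline
    have h3 : Tendsto (fun _ : ℕ => u 0) atTop (nhds 0) := h2.congr hk
    have := tendsto_nhds_unique h3 tendsto_const_nhds
    exact absurd (hu 0) (by linarith)
  refine ⟨x₀, fun x y hxy => ?_⟩
  rcases eq_or_ne x y with rfl | hne
  · exact ⟨rfl, rfl⟩
  have hn : 0 < ‖x - y‖ := norm_pos_iff.2 (sub_ne_zero.2 hne)
  set e := ‖x - y‖⁻¹ • (x - y) with hedef
  have he : ‖e‖ = 1 := by rw [hedef, norm_smul, norm_inv, norm_norm, inv_mul_cancel₀ hn.ne']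
  have hxe : hrefl e (inner ℝ e x₀) x = y := by
    have h1 : ‖y - x₀‖ ^ 2 = ‖x - x₀‖ ^ 2 - 2 * inner ℝ (x - x₀) (x - y) + ‖x - y‖ ^ 2 := by
      rw [← norm_sub_sq_real]; congr 2; abel
    rw [hxy] at h1
    have h2 : inner ℝ e x₀ - inner ℝ e x = - (‖x - y‖ / 2) := by
      rw [← inner_sub_right, hedef, inner_smul_left, real_inner_comm]
      have h3 : inner ℝ (x₀ - x) (x - y) = - inner ℝ (x - x₀) (x - y) := by
        rw [← inner_neg_left, neg_sub]
      rw [h3]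
      simp only [map_inv₀, conj_trivial]
      field_simp
      linarith
    rw [hrefl, h2, hedef, smul_smul]
    have h4 : 2 * -(‖x - y‖ / 2) * ‖x - y‖⁻¹ = -1 := by field_simp
    rw [h4]; module
  have := hl e he x
  rw [hxe] at this
  exact ⟨this.1.symm, this.2.symm⟩


lemma strong_half [NeZero n] {N : ℕ} {α C M : ℝ} (hα : 0 < α) (hC : 0 < C)
    {p q : Fin (N + 1) → ℝ} (hp : ∀ i, 1 ≤ p i) (hq : ∀ i, 1 ≤ q i)
    {u v : EuclideanSpace ℝ (Fin n) → ℝ} (hu : ∀ x, 0 < u x) (hv : ∀ x, 0 < v x)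
    (hcu : Continuous u) (hM : ∀ x, |u x| ≤ M)
    (hF : IsFracLap n α C u (fun x => ∑ i, u x ^ p i * v x ^ q i))
    {e : EuclideanSpace ℝ (Fin n)} (he : ‖e‖ = 1) (l : ℝ)
    (hg : ∀ y, inner ℝ e y < l → u y ≤ u (hrefl e l y) ∧ v y ≤ v (hrefl e l y))
    (x : EuclideanSpace ℝ (Fin n)) (hx : inner ℝ e x < l)
    (hxe : u (hrefl e l x) = u x) :
    ∀ y, inner ℝ e y < l → u (hrefl e l y) = u y ∧ v (hrefl e l y) = v y := by
  have hT : ∀ y, inner ℝ e y = l → hrefl e l y = y := fun y hy => by rw [hrefl, hy]; simp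
  have hmin : ∀ y, inner ℝ e y ≤ l → u y ≤ u (hrefl e l y) := by
    intro y hy
    rcases hy.lt_or_eq with h | h
    · exact (hg y h).1
    · rw [hT y h]
  have hFx : ∑ i, u x ^ p i * v x ^ q i ≤
      ∑ i, u (hrefl e l x) ^ p i * v (hrefl e l x) ^ q i := by
    rw [hxe]
    apply Finset.sum_le_sum
    intro i _
    have := hu x
    have h2 := (hg x hx).2
    have := hq i
    exact mul_le_mul_of_nonneg_left (Real.rpow_le_rpow (hv x).le h2 (by linarith)) (by positivity)
  have hus := strong_max hα hC hcu hM hF he l hmin x hx hxe hFx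
  intro y hy
  refine ⟨hus y hy, ?_⟩
  have h1 := neg_min_est hα hC hcu hM hF he l (fun y => u (hrefl e l y) - u y) (fun _ => rfl) y hy
    (by simp only [hus y hy]; simp) (fun y' hy' => by
      simp only [hus y hy, sub_self]; exact sub_nonneg.2 (hmin y' hy'))
  simp only [hus y hy, sub_self, neg_zero, mul_zero] at h1
  have hd : 0 < (l - inner ℝ e y) ^ α := Real.rpow_pos_of_pos (by linarith) _
  have h2 := nonneg_of_mul_nonneg_left h1 hd
  by_contra hne
  have hlt : v y < v (hrefl e l y) := lt_of_le_of_ne (hg y hy).2 (Ne.symm hne)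
  have h3 : ∑ i, u y ^ p i * v y ^ q i < ∑ i, u y ^ p i * v (hrefl e l y) ^ q i := by
    apply Finset.sum_lt_sum_of_nonempty Finset.univ_nonempty
    intro i _
    have := hu y
    have := hq i
    exact mul_lt_mul_of_pos_left (Real.rpow_lt_rpow (hv y).le hlt (by linarith)) (by positivity)
  linarith

end FracAux

/-- Radial symmetry for the fractional Schrödinger system (Corollary 1.1). -/
theorem radial_symmetry_fractional_schrodinger {n N : ℕ} [NeZero n] (α C a b : ℝ)
    (hα : α ∈ Ioo (0 : ℝ) 2) (hC : 0 < C) (ha : 0 < a) (hb : 0 < b)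
    (p q r s : Fin (N + 1) → ℝ)
    (hp : ∀ i, 1 ≤ p i) (hq : ∀ i, 1 ≤ q i) (hr : ∀ i, 1 ≤ r i) (hs : ∀ i, 1 ≤ s i)
    (u v : EuclideanSpace ℝ (Fin n) → ℝ)
    (hupos : ∀ x, 0 < u x) (hvpos : ∀ x, 0 < v x)
    (huL : MemLalpha n α u) (hvL : MemLalpha n α v)
    (huC : C11loc u) (hvC : C11loc v)
    (hequ : IsFracLap n α C u (fun x => ∑ i, u x ^ p i * v x ^ q i))
    (heqv : IsFracLap n α C v (fun x => ∑ i, u x ^ r i * v x ^ s i))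
    -- (i) decay of the solution at infinity
    (hdecu : ∃ R : ℝ, ∀ x, R < ‖x‖ → u x ≤ ‖x‖ ^ (-a))
    (hdecv : ∃ R : ℝ, ∀ x, R < ‖x‖ → v x ≤ ‖x‖ ^ (-b))
    -- (v), with p = min pᵢ, q = min qᵢ, r = min rᵢ, s = min sᵢ
    (hv5 : α < a * (Finset.univ.inf' Finset.univ_nonempty p)
              + b * (Finset.univ.inf' Finset.univ_nonempty q) - a ∧
           α < a * (Finset.univ.inf' Finset.univ_nonempty p)
              + b * (Finset.univ.inf' Finset.univ_nonempty q) - b ∧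
           α < a * (Finset.univ.inf' Finset.univ_nonempty r)
              + b * (Finset.univ.inf' Finset.univ_nonempty s) - a ∧
           α < a * (Finset.univ.inf' Finset.univ_nonempty r)
              + b * (Finset.univ.inf' Finset.univ_nonempty s) - b) :
    ∃ x₀ : EuclideanSpace ℝ (Fin n), ∀ x y : EuclideanSpace ℝ (Fin n),
      ‖x - x₀‖ = ‖y - x₀‖ → u x = u y ∧ v x = v y := by
  obtain ⟨hα0, -⟩ := hα
  obtain ⟨h51, h52, h53, h54⟩ := hv5
  have hcu : Continuous u := huC.1.continuous
  have hcv : Continuous v := hvC.1.continuous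
  have hu0 := tendsto_cocompact_zero ha hupos hdecu
  have hv0 := tendsto_cocompact_zero hb hvpos hdecv
  obtain ⟨Mu, hMu⟩ := bdd_of hcu hu0
  obtain ⟨Mv, hMv⟩ := bdd_of hcv hv0
  have heqv' : IsFracLap n α C v (fun x => ∑ i, v x ^ s i * u x ^ r i) := by
    have h : (fun x => ∑ i, v x ^ s i * u x ^ r i) = fun x => ∑ i, u x ^ r i * v x ^ s i := by
      funext x
      exact Finset.sum_congr rfl fun i _ => mul_comm _ _
    rw [h]; exact heqv
  have hK1 := KK_dec hp hq ha hb hupos hvpos hdecu hdecv h51 h52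
  have hK2 := KK_dec (α := α) hs hr hb ha hvpos hupos hdecv hdecu (by linarith) (by linarith)
  have hn1 := KK_nonneg hp hq hupos hvpos
  have hn2 := KK_nonneg hs hr hvpos hupos
  refine radial_of_refl hupos hu0 fun e he => ?_
  refine moving_planes (K := fun x => KK p q u v x + KK s r v u x) hα0
    (cst_pos (n := n) (α := α) hC) hupos hcu hcv hu0
    ((KK_cont hupos hvpos hcu hcv).add (KK_cont hvpos hupos hcv hcu))
    (fun x => add_nonneg (hn1 x) (hn2 x)) ?_ he ?_ ?_
  · have := hK1.add hK2
    simpa only [add_mul, add_zero] using this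
  · rintro l ⟨x₁, hx₁, hneg⟩
    set W : EuclideanSpace ℝ (Fin n) → ℝ := fun x =>
      min (u (hrefl e l x) - u x) (v (hrefl e l x) - v x) with hW
    have hRc := continuous_hrefl e l
    have hWc : Continuous W := by fun_prop
    have hRt : Tendsto (hrefl e l) (cocompact _) (cocompact _) :=
      (rflE he l).isClosedEmbedding.tendsto_cocompact
    have hW0 : Tendsto W (cocompact _) (nhds 0) := by
      have := ((hu0.comp hRt).sub hu0).min ((hv0.comp hRt).sub hv0)
      simpa using this
    have hcl : IsClosed {x : EuclideanSpace ℝ (Fin n) | inner ℝ e x ≤ l} :=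
      isClosed_le (by fun_prop) continuous_const
    obtain ⟨x, hx, hmin⟩ := hWc.continuousOn.exists_isMinOn' hcl (x₀ := x₁) hx₁.le
      (Eventually.filter_mono inf_le_left
        ((hW0.eventually_const_lt hneg).mono fun _ h => h.le))
    have hx : inner ℝ e x ≤ l := hx
    have hmin : ∀ y, inner ℝ e y ≤ l → W x ≤ W y := fun y hy => hmin hy
    have hWx : W x < 0 := (hmin x₁ hx₁.le).trans_lt hneg
    have hxl : inner ℝ e x < l := by
      refine lt_of_le_of_ne hx fun h => ?_
      have hR : hrefl e l x = x := by rw [hrefl, h]; simp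
      simp [hW, hR] at hWx
    refine ⟨x, hxl, hWx, ?_⟩
    have hd : 0 < (l - inner ℝ e x) ^ α := Real.rpow_pos_of_pos (by linarith) _
    rcases le_total (u (hrefl e l x) - u x) (v (hrefl e l x) - v x) with h | h
    · have e1 : W x = u (hrefl e l x) - u x := min_eq_left h
      have := bad_half hα0 hC hp hq hupos hvpos hcu hMu hequ he l x hxl (e1 ▸ hWx) h
        (fun y hy => by rw [← e1]; exact (hmin y hy).trans (min_le_left _ _))
      have h2 := mul_nonneg (hn2 x) hd.le
      rw [add_mul]; linarith
    · have e1 : W x = v (hrefl e l x) - v x := min_eq_right h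
      have := bad_half hα0 hC hs hr hvpos hupos hcv hMv heqv' he l x hxl (e1 ▸ hWx) h
        (fun y hy => by rw [← e1]; exact (hmin y hy).trans (min_le_right _ _))
      have h2 := mul_nonneg (hn1 x) hd.le
      rw [add_mul]; linarith
  · rintro l hg ⟨x, hx, h | h⟩
    · exact strong_half hα0 hC hp hq hupos hvpos hcu hMu hequ he l hg x hx h
    · intro y hy
      exact (strong_half hα0 hC hs hr hvpos hupos hcv hMv heqv' he l
        (fun y hy => (hg y hy).symm) x hx h y hy).symm
end
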